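/- arXiv:1102.4478 — 5 statements merged into one kernel-verified Lean document; each statement's English description precedes it below -/
import Mathlib

section
/- Let γ₁, γ₂ : ℝ → ℝ² be C^∞ curves, each with a 3/2-cusp at t = 0. Then γ₁ and γ₂ have the same affine cuspidal curvature μ_A at t = 0 if and only if there exist an equi-affine transformation T of ℝ² and a C^∞ change of parameter u = u(t) near t = 0 with u(0) = 0 and du/dt > 0 such that T(γ₂(u(t))) − γ₁(t) has order higher than t⁵ at t = 0 (i.e. (T(γ₂(u(t))) − γ₁(t))/t⁵ → 0 as t → 0). -/
noncomputable section
open Real Set Filter Topology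

/-- The determinant `[a, b] = a₁b₂ − a₂b₁` of two vectors in the plane. -/
def det2 (a b : ℝ × ℝ) : ℝ := a.1 * b.2 - a.2 * b.1

/-- The Euclidean norm on `ℝ × ℝ`. -/
def enorm2 (a : ℝ × ℝ) : ℝ := Real.sqrt (a.1 ^ 2 + a.2 ^ 2)

/-- The Euclidean arclength parameter of `γ` based at `0`. -/
def sG (γ : ℝ → ℝ × ℝ) (t : ℝ) : ℝ := ∫ u in (0:ℝ)..t, enorm2 (deriv γ u)

/-- The affine arclength parameter of `γ` based at `0`. -/
def sA (γ : ℝ → ℝ × ℝ) (t : ℝ) : ℝ :=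
  ∫ u in (0:ℝ)..t, |det2 (deriv γ u) (iteratedDeriv 2 γ u)| ^ ((1:ℝ)/3)

/-- The Euclidean curvature `κ_g = [γ', γ'']/‖γ'‖³`. -/
def kappaG (γ : ℝ → ℝ × ℝ) (t : ℝ) : ℝ :=
  det2 (deriv γ t) (iteratedDeriv 2 γ t) / enorm2 (deriv γ t) ^ 3

/-- The affine curvature `κ_A`. -/
def kappaA (γ : ℝ → ℝ × ℝ) (t : ℝ) : ℝ :=
  (3 * det2 (deriv γ t) (iteratedDeriv 2 γ t) * det2 (deriv γ t) (iteratedDeriv 4 γ t)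
    + 12 * det2 (deriv γ t) (iteratedDeriv 2 γ t)
        * det2 (iteratedDeriv 2 γ t) (iteratedDeriv 3 γ t)
    - 5 * det2 (deriv γ t) (iteratedDeriv 3 γ t) ^ 2)
  / (9 * |det2 (deriv γ t) (iteratedDeriv 2 γ t)| ^ ((8:ℝ)/3))

/-- `γ` has a 3/2-cusp at `t = 0`. -/
def HasCusp (γ : ℝ → ℝ × ℝ) : Prop :=
  deriv γ 0 = 0 ∧ det2 (iteratedDeriv 2 γ 0) (iteratedDeriv 3 γ 0) ≠ 0

/-- The Euclidean cuspidal curvature at a 3/2-cusp `t = 0`. -/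
def muG (γ : ℝ → ℝ × ℝ) : ℝ :=
  det2 (iteratedDeriv 2 γ 0) (iteratedDeriv 3 γ 0) / enorm2 (iteratedDeriv 2 γ 0) ^ ((5:ℝ)/2)

/-- The affine cuspidal curvature at a 3/2-cusp `t = 0`. -/
def muA (γ : ℝ → ℝ × ℝ) : ℝ :=
  (24 * det2 (iteratedDeriv 2 γ 0) (iteratedDeriv 3 γ 0)
      * det2 (iteratedDeriv 2 γ 0) (iteratedDeriv 5 γ 0)
   + 60 * det2 (iteratedDeriv 2 γ 0) (iteratedDeriv 3 γ 0)
      * det2 (iteratedDeriv 3 γ 0) (iteratedDeriv 4 γ 0)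
   - 35 * det2 (iteratedDeriv 2 γ 0) (iteratedDeriv 4 γ 0) ^ 2)
  / |det2 (iteratedDeriv 2 γ 0) (iteratedDeriv 3 γ 0)| ^ ((12:ℝ)/5)

/-- `γ` (regular at `0`) has a generic inflection point at `t = 0`. -/
def HasGenericInflection (γ : ℝ → ℝ × ℝ) : Prop :=
  deriv γ 0 ≠ 0 ∧ det2 (deriv γ 0) (iteratedDeriv 2 γ 0) = 0 ∧
    det2 (deriv γ 0) (iteratedDeriv 3 γ 0) ≠ 0

/-- The affine inflectional curvature at a generic inflection point `t = 0`. -/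
def muI (γ : ℝ → ℝ × ℝ) : ℝ :=
  Real.sign (det2 (deriv γ 0) (iteratedDeriv 3 γ 0)) *
    (det2 (deriv γ 0) (iteratedDeriv 4 γ 0)
      - 6 * det2 (iteratedDeriv 2 γ 0) (iteratedDeriv 3 γ 0))
  / |det2 (deriv γ 0) (iteratedDeriv 3 γ 0)| ^ ((5:ℝ)/4)

/-- The affine map `x ↦ Ax + v` on the plane, with `A = (a b; c d)`. -/
def applyAff (a b c d : ℝ) (v : ℝ × ℝ) (p : ℝ × ℝ) : ℝ × ℝ :=
  (a * p.1 + b * p.2 + v.1, c * p.1 + d * p.2 + v.2)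


open Asymptotics

lemma poly_zero5 (c0 c1 c2 c3 c4 c5 : ℝ)
    (h : (fun t : ℝ => c0 + c1*t + c2*t^2 + c3*t^3 + c4*t^4 + c5*t^5) =o[𝓝[≠] (0:ℝ)] fun t => t^5) :
    c0 = 0 ∧ c1 = 0 ∧ c2 = 0 ∧ c3 = 0 ∧ c4 = 0 ∧ c5 = 0 := by
  have hne : ∀ᶠ t : ℝ in 𝓝[≠] (0:ℝ), t ≠ 0 := eventually_mem_nhdsWithin
  have key : ∀ (n m : ℕ) (q : ℝ → ℝ), n + m = 5 → Continuous q →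
      ((fun t : ℝ => t^n * q t) =o[𝓝[≠] (0:ℝ)] fun t => t^5) → q 0 = 0 := by
    intro n m q hnm hq ho
    have h1 : Tendsto (fun t : ℝ => t^n * q t / t^5) (𝓝[≠] (0:ℝ)) (𝓝 0) := ho.tendsto_div_nhds_zero
    have h2 : Tendsto (fun t : ℝ => t^m) (𝓝[≠] (0:ℝ)) (𝓝 ((0:ℝ)^m)) :=
      ((continuous_pow m).tendsto (0:ℝ)).mono_left nhdsWithin_le_nhds
    have h3 := h1.mul h2
    rw [zero_mul] at h3
    have h4 : Tendsto q (𝓝[≠] (0:ℝ)) (𝓝 0) := by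
      refine h3.congr' ?_
      filter_upwards [hne] with t ht
      have : t^5 = t^n * t^m := by rw [← pow_add, hnm]
      rw [this]
      field_simp
    exact tendsto_nhds_unique ((hq.tendsto 0).mono_left nhdsWithin_le_nhds) h4
  have e0 : c0 = 0 := by
    have hk := key 0 5 (fun t : ℝ => c0 + c1*t + c2*t^2 + c3*t^3 + c4*t^4 + c5*t^5) rfl
      (by fun_prop) (h.congr_left (fun t => by ring))
    linarith
  subst e0
  have e1 : c1 = 0 := by
    have hk := key 1 4 (fun t : ℝ => c1 + c2*t + c3*t^2 + c4*t^3 + c5*t^4) rfl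
      (by fun_prop) (h.congr_left (fun t => by ring))
    linarith
  subst e1
  have e2 : c2 = 0 := by
    have hk := key 2 3 (fun t : ℝ => c2 + c3*t + c4*t^2 + c5*t^3) rfl
      (by fun_prop) (h.congr_left (fun t => by ring))
    linarith
  subst e2
  have e3 : c3 = 0 := by
    have hk := key 3 2 (fun t : ℝ => c3 + c4*t + c5*t^2) rfl
      (by fun_prop) (h.congr_left (fun t => by ring))
    linarith
  subst e3
  have e4 : c4 = 0 := by
    have hk := key 4 1 (fun t : ℝ => c4 + c5*t) rfl
      (by fun_prop) (h.congr_left (fun t => by ring))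
    linarith
  subst e4
  have e5 : c5 = 0 := by
    have hk := key 5 0 (fun t : ℝ => c5) rfl
      (by fun_prop) (h.congr_left (fun t => by ring))
    linarith
  exact ⟨rfl, rfl, rfl, rfl, rfl, e5⟩

lemma taylor_cusp (γ : ℝ → ℝ × ℝ) (h : ContDiff ℝ (⊤:ℕ∞) γ) (h1 : deriv γ 0 = 0) :
    (fun t : ℝ => γ t - (γ 0 + (t^2/2) • iteratedDeriv 2 γ 0 + (t^3/6) • iteratedDeriv 3 γ 0
      + (t^4/24) • iteratedDeriv 4 γ 0 + (t^5/120) • iteratedDeriv 5 γ 0)) =o[𝓝 (0:ℝ)]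
      fun t => t^5 := by
  have ht := taylor_isLittleO (f := γ) (n := 5) (x₀ := 0) convex_univ (mem_univ (0:ℝ))
    (contDiff_infty.1 h 5).contDiffOn
  rw [nhdsWithin_univ] at ht
  refine ht.congr (fun t => ?_) (fun t => by simp)
  rw [taylor_within_apply]
  simp only [iteratedDerivWithin_univ, Finset.sum_range_succ, Finset.sum_range_zero]
  have h1' : iteratedDeriv 1 γ 0 = 0 := by rw [iteratedDeriv_one, h1]
  rw [h1', iteratedDeriv_zero]
  norm_num [Nat.factorial]
  simp only [div_eq_inv_mul, mul_one]

lemma taylor_u (u : ℝ → ℝ) (ε : ℝ) (hε : 0 < ε) (h : ContDiffOn ℝ (⊤:ℕ∞) u (Set.Ioo (-ε) ε))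
    (h0 : u 0 = 0) : ∃ α β δ : ℝ,
    (fun t : ℝ => u t - (deriv u 0 * t + α*t^2 + β*t^3 + δ*t^4)) =o[𝓝 (0:ℝ)] fun t => t^4 := by
  have hm : (0:ℝ) ∈ Set.Ioo (-ε) ε := by constructor <;> linarith
  have ht := taylor_isLittleO (f := u) (n := 4) (x₀ := 0) (convex_Ioo (-ε) ε) hm
    (contDiffOn_infty.1 h 4)
  rw [isOpen_Ioo.nhdsWithin_eq hm] at ht
  refine ⟨(2:ℝ)⁻¹ * iteratedDerivWithin 2 u (Set.Ioo (-ε) ε) 0,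
    (6:ℝ)⁻¹ * iteratedDerivWithin 3 u (Set.Ioo (-ε) ε) 0,
    (24:ℝ)⁻¹ * iteratedDerivWithin 4 u (Set.Ioo (-ε) ε) 0, ?_⟩
  refine ht.congr (fun t => ?_) (fun t => by simp)
  rw [taylor_within_apply]
  simp only [Finset.sum_range_succ, Finset.sum_range_zero]
  rw [iteratedDerivWithin_one, derivWithin_of_isOpen isOpen_Ioo hm, iteratedDerivWithin_zero, h0]
  norm_num [Nat.factorial]
  ring

lemma comp_exp (f u : ℝ → ℝ) (c0 c2 c3 c4 c5 k α β δ : ℝ)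
    (hf : (fun t : ℝ => f t - (c0 + c2*t^2 + c3*t^3 + c4*t^4 + c5*t^5)) =o[𝓝 (0:ℝ)] fun t => t^5)
    (hu : (fun t : ℝ => u t - (k * t + α*t^2 + β*t^3 + δ*t^4)) =o[𝓝 (0:ℝ)] fun t => t^4) :
    (fun t : ℝ => f (u t) - (c0 + (c2*k^2)*t^2 + (c2*(2*k*α) + c3*k^3)*t^3
      + (c2*(α^2+2*k*β) + c3*(3*k^2*α) + c4*k^4)*t^4
      + (c2*(2*k*δ+2*α*β) + c3*(3*k*α^2+3*k^2*β) + c4*(4*k^3*α) + c5*k^5)*t^5))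
      =o[𝓝 (0:ℝ)] fun t => t^5 := by
  set p : ℝ → ℝ := fun t => k * t + α*t^2 + β*t^3 + δ*t^4 with hp
  have bq : ∀ q : ℝ → ℝ, Continuous q → q =O[𝓝 (0:ℝ)] (fun _ => (1:ℝ)) :=
    fun q hq => (hq.tendsto 0).isBigO_one ℝ
  have hpO : p =O[𝓝 (0:ℝ)] fun t => t := by
    have := (isBigO_refl (fun t : ℝ => t) (𝓝 0)).mul
      (bq (fun t => k + α*t + β*t^2 + δ*t^3) (by fun_prop))
    refine this.congr (fun t => ?_) (fun t => by simp)
    simp only [hp]; ring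
  have h41 : (fun t : ℝ => t^4) =O[𝓝 (0:ℝ)] fun t => t := by
    have := (isBigO_refl (fun t : ℝ => t) (𝓝 0)).mul (bq (fun t => t^3) (by fun_prop))
    exact this.congr (fun t => by ring) (fun t => by simp)
  have huO : u =O[𝓝 (0:ℝ)] fun t => t := by
    have := (hu.isBigO.trans h41).add hpO
    exact this.congr_left (fun t => by ring)
  have hid : Tendsto (fun t : ℝ => t) (𝓝 0) (𝓝 0) := tendsto_id
  have hut : Tendsto u (𝓝 0) (𝓝 0) := huO.trans_tendsto hid
  have hpt : Tendsto p (𝓝 0) (𝓝 0) := hpO.trans_tendsto hid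
  have hR := (hf.comp_tendsto hut).trans_isBigO (huO.pow 5)
  have hu1 := hut.isBigO_one ℝ
  have hp1 := hpt.isBigO_one ℝ
  -- difference of the main polynomial at u and at p
  have hw : (fun t => c2 + c3 * (u t) + c4 * ((u t)^2 + (p t)^2) + c5*((u t)^3 + u t * (p t)^2 ))
      =O[𝓝 (0:ℝ)] (fun _ => (1:ℝ)) := by
    apply Tendsto.isBigO_one ℝ (c := c2 + c3 * 0 + c4 * (0^2+0^2) + c5*(0^3+0*0^2))
    exact (((tendsto_const_nhds.add (hut.const_mul _)).add
      (((hut.pow 2).add (hpt.pow 2)).const_mul _)).add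
      (((hut.pow 3).add (hut.mul (hpt.pow 2))).const_mul _))
  have hw2 : (fun t => c3 * (p t)^2 + c5 * (p t)^4) =O[𝓝 (0:ℝ)] (fun t => t) := by
    have hc : (fun t => c3 * p t + c5 * (p t)^3) =O[𝓝 (0:ℝ)] (fun _ => (1:ℝ)) :=
      bq _ (by fun_prop)
    exact (hpO.mul hc).congr (fun t => by ring) (fun t => by simp)
  have hsum : (fun t => (u t + p t) * (c2 + c3 * (u t) + c4 * ((u t)^2 + (p t)^2)
      + c5*((u t)^3 + u t * (p t)^2 )) + (c3 * (p t)^2 + c5 * (p t)^4)) =O[𝓝 (0:ℝ)] (fun t => t) :=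
    (((huO.add hpO).mul hw).congr_right (fun t => by simp)).add hw2
  have hD := (hu.mul_isBigO hsum).congr_right (g₂ := fun t => t^5) (fun t => by ring)
  -- tail of the polynomial
  obtain ⟨q, hq, hqe⟩ : ∃ q : ℝ → ℝ, Continuous q ∧ ∀ t, t^6 * q t =
      (c2*(p t)^2 + c3*(p t)^3 + c4*(p t)^4 + c5*(p t)^5) -
      ((c2*k^2)*t^2 + (c2*(2*k*α) + c3*k^3)*t^3
      + (c2*(α^2+2*k*β) + c3*(3*k^2*α) + c4*k^4)*t^4
      + (c2*(2*k*δ+2*α*β) + c3*(3*k*α^2+3*k^2*β) + c4*(4*k^3*α) + c5*k^5)*t^5) := by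
    refine ⟨fun t => c2*(2*α*δ+β^2 + 2*β*δ*t + δ^2*t^2)
      + c3*(3*k^2*δ + 3*k*(2*α*(β+δ*t)+t*(β+δ*t)^2) + (α+β*t+δ*t^2)^3)
      + c4*(4*k^3*(β+δ*t) + 6*k^2*(α+β*t+δ*t^2)^2 + 4*k*t*(α+β*t+δ*t^2)^3
        + t^2*(α+β*t+δ*t^2)^4)
      + c5*(5*k^4*(α+β*t+δ*t^2)+10*k^3*t*(α+β*t+δ*t^2)^2+10*k^2*t^2*(α+β*t+δ*t^2)^3
        + 5*k*t^3*(α+β*t+δ*t^2)^4+t^4*(α+β*t+δ*t^2)^5), by fun_prop, fun t => ?_⟩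
    simp only [hp]; ring
  have hT : (fun t : ℝ => t^6 * q t) =o[𝓝 (0:ℝ)] fun t => t^5 := by
    have h6 : (fun t : ℝ => t^6) =o[𝓝 (0:ℝ)] fun t => t^5 := isLittleO_pow_pow (by norm_num)
    exact (h6.mul_isBigO (bq q hq)).congr_right (fun t => by simp)
  refine ((hR.add hD).add hT).congr_left (fun t => ?_)
  rw [hqe]
  simp only [Function.comp]
  ring

/-- coefficient of the `n`-th Taylor polynomial of the composite, one coordinate -/
def H2 (c2 k : ℝ) : ℝ := c2*k^2
def H3 (c2 c3 k α : ℝ) : ℝ := c2*(2*k*α) + c3*k^3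
def H4 (c2 c3 c4 k α β : ℝ) : ℝ := c2*(α^2+2*k*β) + c3*(3*k^2*α) + c4*k^4
def H5 (c2 c3 c4 c5 k α β δ : ℝ) : ℝ :=
  c2*(2*k*δ+2*α*β) + c3*(3*k*α^2+3*k^2*β) + c4*(4*k^3*α) + c5*k^5

lemma main_iff (γ₁ γ₂ : ℝ → ℝ × ℝ) (u : ℝ → ℝ) (a b c d : ℝ) (v : ℝ × ℝ)
    (x0 x2 x3 x4 x5 y0 y2 y3 y4 y5 X0 X2 X3 X4 X5 Y0 Y2 Y3 Y4 Y5 k α β δ : ℝ)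
    (hX : (fun t : ℝ => (γ₁ t).1 - (X0 + X2*t^2 + X3*t^3 + X4*t^4 + X5*t^5)) =o[𝓝 (0:ℝ)]
      fun t => t^5)
    (hY : (fun t : ℝ => (γ₁ t).2 - (Y0 + Y2*t^2 + Y3*t^3 + Y4*t^4 + Y5*t^5)) =o[𝓝 (0:ℝ)]
      fun t => t^5)
    (hx : (fun t : ℝ => (γ₂ t).1 - (x0 + x2*t^2 + x3*t^3 + x4*t^4 + x5*t^5)) =o[𝓝 (0:ℝ)]
      fun t => t^5)
    (hy : (fun t : ℝ => (γ₂ t).2 - (y0 + y2*t^2 + y3*t^3 + y4*t^4 + y5*t^5)) =o[𝓝 (0:ℝ)]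
      fun t => t^5)
    (hu : (fun t : ℝ => u t - (k * t + α*t^2 + β*t^3 + δ*t^4)) =o[𝓝 (0:ℝ)] fun t => t^4) :
    Tendsto (fun t => (t ^ 5)⁻¹ • (applyAff a b c d v (γ₂ (u t)) - γ₁ t))
            (𝓝[≠] (0:ℝ)) (𝓝 (0 : ℝ × ℝ)) ↔
    (a*x0+b*y0+v.1 = X0 ∧ a*H2 x2 k + b*H2 y2 k = X2 ∧ a*H3 x2 x3 k α + b*H3 y2 y3 k α = X3
     ∧ a*H4 x2 x3 x4 k α β + b*H4 y2 y3 y4 k α β = X4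
     ∧ a*H5 x2 x3 x4 x5 k α β δ + b*H5 y2 y3 y4 y5 k α β δ = X5) ∧
    (c*x0+d*y0+v.2 = Y0 ∧ c*H2 x2 k + d*H2 y2 k = Y2 ∧ c*H3 x2 x3 k α + d*H3 y2 y3 k α = Y3
     ∧ c*H4 x2 x3 x4 k α β + d*H4 y2 y3 y4 k α β = Y4
     ∧ c*H5 x2 x3 x4 x5 k α β δ + d*H5 y2 y3 y4 y5 k α β δ = Y5) := by
  have hcx := comp_exp (fun t => (γ₂ t).1) u x0 x2 x3 x4 x5 k α β δ hx hu
  have hcy := comp_exp (fun t => (γ₂ t).2) u y0 y2 y3 y4 y5 k α β δ hy hu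
  have coord : ∀ (a b w X0 X2 X3 X4 X5 : ℝ) (g : ℝ → ℝ),
      (fun t : ℝ => g t - (X0 + X2*t^2 + X3*t^3 + X4*t^4 + X5*t^5)) =o[𝓝 (0:ℝ)] (fun t => t^5) →
      (Tendsto (fun t => (t^5)⁻¹ * (a * (γ₂ (u t)).1 + b * (γ₂ (u t)).2 + w - g t)) (𝓝[≠] (0:ℝ))
        (𝓝 0) ↔
      (a*x0+b*y0+w = X0 ∧ a*H2 x2 k + b*H2 y2 k = X2 ∧ a*H3 x2 x3 k α + b*H3 y2 y3 k α = X3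
     ∧ a*H4 x2 x3 x4 k α β + b*H4 y2 y3 y4 k α β = X4
     ∧ a*H5 x2 x3 x4 x5 k α β δ + b*H5 y2 y3 y4 y5 k α β δ = X5)) := by
    intro a b w X0 X2 X3 X4 X5 g hg
    have hE := (((hcx.const_mul_left a).add (hcy.const_mul_left b)).sub hg).mono
      (nhdsWithin_le_nhds (s := {(0:ℝ)}ᶜ))
    have hiff : Tendsto (fun t => (t^5)⁻¹ * (a * (γ₂ (u t)).1 + b * (γ₂ (u t)).2 + w - g t))
        (𝓝[≠] (0:ℝ)) (𝓝 0) ↔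
        (fun t => a * (γ₂ (u t)).1 + b * (γ₂ (u t)).2 + w - g t) =o[𝓝[≠] (0:ℝ)] fun t => t^5 := by
      rw [isLittleO_iff_tendsto']
      · simp only [div_eq_inv_mul]
      · have hne : ∀ᶠ t : ℝ in 𝓝[≠] (0:ℝ), t ≠ 0 := eventually_mem_nhdsWithin
        filter_upwards [hne] with t ht h5
        exact absurd h5 (pow_ne_zero 5 ht)
    rw [hiff]
    constructor
    · intro ho
      have hp := poly_zero5 (a*x0+b*y0+w - X0) 0 (a*H2 x2 k + b*H2 y2 k - X2)
        (a*H3 x2 x3 k α + b*H3 y2 y3 k α - X3)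
        (a*H4 x2 x3 x4 k α β + b*H4 y2 y3 y4 k α β - X4)
        (a*H5 x2 x3 x4 x5 k α β δ + b*H5 y2 y3 y4 y5 k α β δ - X5)
        ((ho.sub hE).congr_left (fun t => by simp only [H2, H3, H4, H5]; ring))
      obtain ⟨e0, -, e2, e3, e4, e5⟩ := hp
      refine ⟨?_, ?_, ?_, ?_, ?_⟩ <;> linarith
    · rintro ⟨e0, e2, e3, e4, e5⟩
      refine hE.congr_left (fun t => ?_)
      rw [← e0, ← e2, ← e3, ← e4, ← e5]
      simp only [H2, H3, H4, H5]; ring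
  rw [← coord a b v.1 X0 X2 X3 X4 X5 _ hX, ← coord c d v.2 Y0 Y2 Y3 Y4 Y5 _ hY]
  rw [Prod.tendsto_iff]
  simp only [applyAff, Prod.smul_fst, Prod.smul_snd, Prod.fst_sub, Prod.snd_sub, smul_eq_mul,
    Prod.fst_zero, Prod.snd_zero]

/-- numerator of the invariant in terms of Taylor coefficients -/
def NN (x2 x3 x4 x5 y2 y3 y4 y5 : ℝ) : ℝ :=
  6*(x2*y3-y2*x3)*(x2*y5-y2*x5) + 9*(x2*y3-y2*x3)*(x3*y4-y3*x4) - 7*(x2*y4-y2*x4)^2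

lemma NN_H (x2 x3 x4 x5 y2 y3 y4 y5 k α β δ : ℝ) :
    NN (H2 x2 k) (H3 x2 x3 k α) (H4 x2 x3 x4 k α β) (H5 x2 x3 x4 x5 k α β δ)
      (H2 y2 k) (H3 y2 y3 k α) (H4 y2 y3 y4 k α β) (H5 y2 y3 y4 y5 k α β δ)
    = k^12 * NN x2 x3 x4 x5 y2 y3 y4 y5 := by
  simp only [NN, H2, H3, H4, H5]; ring

lemma NN_lin (a b c d x2 x3 x4 x5 y2 y3 y4 y5 : ℝ) :
    NN (a*x2+b*y2) (a*x3+b*y3) (a*x4+b*y4) (a*x5+b*y5)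
      (c*x2+d*y2) (c*x3+d*y3) (c*x4+d*y4) (c*x5+d*y5)
    = (a*d-b*c)^2 * NN x2 x3 x4 x5 y2 y3 y4 y5 := by
  simp only [NN]; ring

lemma cramer (x2 x3 xj y2 y3 yj X2 X3 Xj Y2 Y3 Yj s : ℝ) (hD : x2*y3-y2*x3 ≠ 0)
    (hs : s ≠ 0)
    (h23 : X2*Y3-Y2*X3 = s*(x2*y3-y2*x3)) (h2j : X2*Yj-Y2*Xj = s*(x2*yj-y2*xj))
    (h3j : X3*Yj-Y3*Xj = s*(x3*yj-y3*xj)) :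
    (X2*y3 - X3*y2)/(x2*y3-y2*x3) * xj + (X3*x2-X2*x3)/(x2*y3-y2*x3) * yj = Xj ∧
    (Y2*y3 - Y3*y2)/(x2*y3-y2*x3) * xj + (Y3*x2-Y2*x3)/(x2*y3-y2*x3) * yj = Yj := by
  constructor
  · have : s * ((X2*y3 - X3*y2) * xj + (X3*x2-X2*x3) * yj) = s * (Xj * (x2*y3-y2*x3)) := by
      linear_combination X3 * (-h2j) + X2 * h3j + Xj * h23
    have := mul_left_cancel₀ hs this
    rw [div_mul_eq_mul_div, div_mul_eq_mul_div, ← add_div, div_eq_iff hD, this]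
  · have : s * ((Y2*y3 - Y3*y2) * xj + (Y3*x2-Y2*x3) * yj) = s * (Yj * (x2*y3-y2*x3)) := by
      linear_combination Y3 * (-h2j) + Y2 * h3j + Yj * h23
    have := mul_left_cancel₀ hs this
    rw [div_mul_eq_mul_div, div_mul_eq_mul_div, ← add_div, div_eq_iff hD, this]

lemma muA_eq (γ : ℝ → ℝ × ℝ) (x2 x3 x4 x5 y2 y3 y4 y5 : ℝ)
    (h2 : iteratedDeriv 2 γ 0 = (2*x2, 2*y2)) (h3 : iteratedDeriv 3 γ 0 = (6*x3, 6*y3))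
    (h4 : iteratedDeriv 4 γ 0 = (24*x4, 24*y4)) (h5 : iteratedDeriv 5 γ 0 = (120*x5, 120*y5)) :
    muA γ = (11520 / (12:ℝ)^((12:ℝ)/5)) *
      (NN x2 x3 x4 x5 y2 y3 y4 y5 / |x2*y3-y2*x3|^((12:ℝ)/5)) := by
  simp only [muA, h2, h3, h4, h5, det2]
  have e : (2*x2*(6*y3) - 2*y2*(6*x3)) = 12 * (x2*y3-y2*x3) := by ring
  rw [e, abs_mul, Real.mul_rpow (abs_nonneg _) (abs_nonneg _), abs_of_pos (by norm_num : (0:ℝ)<12),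
    div_mul_div_comm]
  congr 1
  simp only [NN]; ring

/-- Two 3/2-cusps have the same affine cuspidal curvature iff they agree, up to an
equi-affine transformation and an orientation preserving change of parameter,
to order higher than `t⁵`. -/
theorem stmt_4 (γ₁ γ₂ : ℝ → ℝ × ℝ)
    (hγ₁ : ContDiff ℝ (⊤:ℕ∞) γ₁) (hγ₂ : ContDiff ℝ (⊤:ℕ∞) γ₂)
    (hc₁ : HasCusp γ₁) (hc₂ : HasCusp γ₂) :
    muA γ₁ = muA γ₂ ↔
      ∃ (a b c d : ℝ) (v : ℝ × ℝ), |a * d - b * c| = 1 ∧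
        ∃ ε > (0:ℝ), ∃ u : ℝ → ℝ,
          ContDiffOn ℝ (⊤:ℕ∞) u (Set.Ioo (-ε) ε) ∧ u 0 = 0 ∧ 0 < deriv u 0 ∧
          Tendsto (fun t => (t ^ 5)⁻¹ • (applyAff a b c d v (γ₂ (u t)) - γ₁ t))
            (𝓝[≠] (0:ℝ)) (𝓝 (0 : ℝ × ℝ)) := by
  obtain ⟨hd1, hD1⟩ := hc₁
  obtain ⟨hd2, hD2⟩ := hc₂
  have co : ∀ γ : ℝ → ℝ × ℝ, ContDiff ℝ (⊤:ℕ∞) γ → deriv γ 0 = 0 →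
      ∃ x0 x2 x3 x4 x5 y0 y2 y3 y4 y5 : ℝ,
      ((fun t : ℝ => (γ t).1 - (x0 + x2*t^2 + x3*t^3 + x4*t^4 + x5*t^5)) =o[𝓝 (0:ℝ)]
        fun t => t^5) ∧
      ((fun t : ℝ => (γ t).2 - (y0 + y2*t^2 + y3*t^3 + y4*t^4 + y5*t^5)) =o[𝓝 (0:ℝ)]
        fun t => t^5) ∧
      iteratedDeriv 2 γ 0 = (2*x2, 2*y2) ∧ iteratedDeriv 3 γ 0 = (6*x3, 6*y3) ∧
      iteratedDeriv 4 γ 0 = (24*x4, 24*y4) ∧ iteratedDeriv 5 γ 0 = (120*x5, 120*y5) := by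
    intro γ hγ hd
    have ht := taylor_cusp γ hγ hd
    have ht1 := (isBigO_fst_prod' (f' := fun t : ℝ => γ t - (γ 0 + (t^2/2) • iteratedDeriv 2 γ 0
      + (t^3/6) • iteratedDeriv 3 γ 0
      + (t^4/24) • iteratedDeriv 4 γ 0 + (t^5/120) • iteratedDeriv 5 γ 0))).trans_isLittleO ht
    have ht2 := (isBigO_snd_prod' (f' := fun t : ℝ => γ t - (γ 0 + (t^2/2) • iteratedDeriv 2 γ 0
      + (t^3/6) • iteratedDeriv 3 γ 0
      + (t^4/24) • iteratedDeriv 4 γ 0 + (t^5/120) • iteratedDeriv 5 γ 0))).trans_isLittleO ht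
    refine ⟨(γ 0).1, (iteratedDeriv 2 γ 0).1/2, (iteratedDeriv 3 γ 0).1/6,
      (iteratedDeriv 4 γ 0).1/24, (iteratedDeriv 5 γ 0).1/120,
      (γ 0).2, (iteratedDeriv 2 γ 0).2/2, (iteratedDeriv 3 γ 0).2/6,
      (iteratedDeriv 4 γ 0).2/24, (iteratedDeriv 5 γ 0).2/120, ?_, ?_, ?_, ?_, ?_, ?_⟩
    · refine ht1.congr_left (fun t => ?_)
      simp only [Prod.fst_sub, Prod.fst_add, Prod.smul_fst, smul_eq_mul]; ring
    · refine ht2.congr_left (fun t => ?_)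
      simp only [Prod.snd_sub, Prod.snd_add, Prod.smul_snd, smul_eq_mul]; ring
    all_goals (apply Prod.ext <;> simp only <;> ring)
  obtain ⟨X0, X2, X3, X4, X5, Y0, Y2, Y3, Y4, Y5, hX, hY, hg2, hg3, hg4, hg5⟩ := co γ₁ hγ₁ hd1
  obtain ⟨x0, x2, x3, x4, x5, y0, y2, y3, y4, y5, hx, hy, hh2, hh3, hh4, hh5⟩ := co γ₂ hγ₂ hd2
  have hE1 : X2*Y3-Y2*X3 ≠ 0 := by
    intro h; apply hD1; rw [hg2, hg3]; simp only [det2]; linear_combination 12 * h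
  have hE2 : x2*y3-y2*x3 ≠ 0 := by
    intro h; apply hD2; rw [hh2, hh3]; simp only [det2]; linear_combination 12 * h
  rw [muA_eq γ₁ _ _ _ _ _ _ _ _ hg2 hg3 hg4 hg5, muA_eq γ₂ _ _ _ _ _ _ _ _ hh2 hh3 hh4 hh5,
    mul_right_inj' (by positivity)]
  have hpow : ∀ k : ℝ, 0 < k → ((k^5 : ℝ))^((12:ℝ)/5) = k^12 := by
    intro k hk
    rw [← Real.rpow_natCast, ← Real.rpow_mul hk.le, ← Real.rpow_natCast]
    norm_num
  have hP1 : 0 < |X2*Y3-Y2*X3| := abs_pos.mpr hE1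
  have hP2 : 0 < |x2*y3-y2*x3| := abs_pos.mpr hE2
  have hR2 : 0 < |x2*y3-y2*x3|^((12:ℝ)/5) := Real.rpow_pos_of_pos hP2 _
  constructor
  · intro hmu
    obtain ⟨k, hk, hk5⟩ : ∃ k : ℝ, 0 < k ∧ k^5 = |X2*Y3-Y2*X3| / |x2*y3-y2*x3| := by
      refine ⟨(|X2*Y3-Y2*X3| / |x2*y3-y2*x3|)^((1:ℝ)/5), by positivity, ?_⟩
      rw [← Real.rpow_natCast, ← Real.rpow_mul (by positivity)]
      norm_num
    have hk5' : |X2*Y3-Y2*X3| = k^5 * |x2*y3-y2*x3| := by rw [hk5]; field_simp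
    have hNN : NN X2 X3 X4 X5 Y2 Y3 Y4 Y5 = k^12 * NN x2 x3 x4 x5 y2 y3 y4 y5 := by
      rw [hk5', Real.mul_rpow (by positivity) (by positivity), hpow k hk] at hmu
      field_simp at hmu
      linarith
    obtain ⟨s, hs, hDs⟩ : ∃ s : ℝ, |s| = 1 ∧ X2*Y3-Y2*X3 = s * (k^5*(x2*y3-y2*x3)) := by
      refine ⟨(X2*Y3-Y2*X3)/(k^5*(x2*y3-y2*x3)), ?_, by field_simp⟩
      rw [abs_div, abs_mul, abs_of_pos (pow_pos hk 5), ← hk5', div_self hP1.ne']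
    have hs2 : s^2 = 1 := by rw [← sq_abs, hs]; norm_num
    have hs0 : s ≠ 0 := by intro h; rw [h] at hs2; norm_num at hs2
    obtain ⟨α, hα⟩ : ∃ α, X2*Y4-Y2*X4 = s*(k^6*(x2*y4-y2*x4) + 3*k^4*α*(x2*y3-y2*x3)) := by
      refine ⟨((X2*Y4-Y2*X4)/s - k^6*(x2*y4-y2*x4)) / (3*k^4*(x2*y3-y2*x3)), ?_⟩
      field_simp; ring
    obtain ⟨β, hβ⟩ : ∃ β, X3*Y4-Y3*X4 = s*(H3 x2 x3 k α * H4 y2 y3 y4 k α 0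
        - H3 y2 y3 k α * H4 x2 x3 x4 k α 0 - 2*k^4*β*(x2*y3-y2*x3)) := by
      refine ⟨(H3 x2 x3 k α * H4 y2 y3 y4 k α 0
        - H3 y2 y3 k α * H4 x2 x3 x4 k α 0 - (X3*Y4-Y3*X4)/s) / (2*k^4*(x2*y3-y2*x3)), ?_⟩
      field_simp; ring
    obtain ⟨δ, hδ⟩ : ∃ δ, X3*Y5-Y3*X5 = s*(H3 x2 x3 k α * H5 y2 y3 y4 y5 k α β 0
        - H3 y2 y3 k α * H5 x2 x3 x4 x5 k α β 0 - 2*k^4*δ*(x2*y3-y2*x3)) := by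
      refine ⟨(H3 x2 x3 k α * H5 y2 y3 y4 y5 k α β 0
        - H3 y2 y3 k α * H5 x2 x3 x4 x5 k α β 0 - (X3*Y5-Y3*X5)/s) / (2*k^4*(x2*y3-y2*x3)), ?_⟩
      field_simp; ring
    have hNH := NN_H x2 x3 x4 x5 y2 y3 y4 y5 k α β δ
    rw [← hNN] at hNH
    have hQ : H2 x2 k * H3 y2 y3 k α - H2 y2 k * H3 x2 x3 k α = k^5*(x2*y3-y2*x3) := by
      simp only [H2, H3]; ring
    have q24 : X2*Y4-Y2*X4 = s*(H2 x2 k * H4 y2 y3 y4 k α β - H2 y2 k * H4 x2 x3 x4 k α β) := by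
      rw [hα]; simp only [H2, H4]; ring
    have q34 : X3*Y4-Y3*X4 = s*(H3 x2 x3 k α * H4 y2 y3 y4 k α β
        - H3 y2 y3 k α * H4 x2 x3 x4 k α β) := by
      rw [hβ]; simp only [H3, H4]; ring
    have q35 : X3*Y5-Y3*X5 = s*(H3 x2 x3 k α * H5 y2 y3 y4 y5 k α β δ
        - H3 y2 y3 k α * H5 x2 x3 x4 x5 k α β δ) := by
      rw [hδ]; simp only [H3, H5]; ring
    have hQ0 : H2 x2 k * H3 y2 y3 k α - H2 y2 k * H3 x2 x3 k α ≠ 0 := by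
      rw [hQ]; positivity
    rw [← hQ] at hDs
    have q25 : X2*Y5-Y2*X5 = s*(H2 x2 k * H5 y2 y3 y4 y5 k α β δ
        - H2 y2 k * H5 x2 x3 x4 x5 k α β δ) := by
      have h6 : 6*(X2*Y3-Y2*X3) ≠ 0 := mul_ne_zero (by norm_num) hE1
      apply mul_left_cancel₀ h6
      simp only [NN] at hNH
      rw [hDs, q24, q34] at hNH
      rw [hDs]
      generalize H2 x2 k = p2 at *
      generalize H2 y2 k = r2 at *
      generalize H3 x2 x3 k α = p3 at *
      generalize H3 y2 y3 k α = r3 at *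
      generalize H4 x2 x3 x4 k α β = p4 at *
      generalize H4 y2 y3 y4 k α β = r4 at *
      generalize H5 x2 x3 x4 x5 k α β δ = p5 at *
      generalize H5 y2 y3 y4 y5 k α β δ = r5 at *
      linear_combination (-1) * hNH - (6*(p2*r3-r2*p3)*(p2*r5-r2*p5)
        + 9*(p2*r3-r2*p3)*(p3*r4-r3*p4) - 7*(p2*r4-r2*p4)^2) * hs2
    have c2 := cramer _ _ (H2 x2 k) _ _ (H2 y2 k) X2 X3 X2 Y2 Y3 Y2 s hQ0 hs0 hDs (by ring)
      (by linear_combination (-1) * hDs)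
    have c3 := cramer _ _ (H3 x2 x3 k α) _ _ (H3 y2 y3 k α) X2 X3 X3 Y2 Y3 Y3 s hQ0 hs0 hDs hDs
      (by ring)
    have c4 := cramer _ _ _ _ _ _ X2 X3 X4 Y2 Y3 Y4 s hQ0 hs0 hDs q24 q34
    have c5 := cramer _ _ _ _ _ _ X2 X3 X5 Y2 Y3 Y5 s hQ0 hs0 hDs q25 q35
    set Q := H2 x2 k * H3 y2 y3 k α - H2 y2 k * H3 x2 x3 k α with hQdef
    refine ⟨(X2*H3 y2 y3 k α - X3*H2 y2 k)/Q, (X3*H2 x2 k-X2*H3 x2 x3 k α)/Q,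
      (Y2*H3 y2 y3 k α - Y3*H2 y2 k)/Q, (Y3*H2 x2 k-Y2*H3 x2 x3 k α)/Q,
      (X0 - ((X2*H3 y2 y3 k α - X3*H2 y2 k)/Q*x0 + (X3*H2 x2 k-X2*H3 x2 x3 k α)/Q*y0),
       Y0 - ((Y2*H3 y2 y3 k α - Y3*H2 y2 k)/Q*x0 + (Y3*H2 x2 k-Y2*H3 x2 x3 k α)/Q*y0)),
      ?_, 1, one_pos, fun t => k * t + α*t^2 + β*t^3 + δ*t^4, ?_, by simp, ?_, ?_⟩
    · rw [← hs]
      congr 1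
      have : (X2*H3 y2 y3 k α - X3*H2 y2 k) * (Y3*H2 x2 k-Y2*H3 x2 x3 k α) -
          (X3*H2 x2 k-X2*H3 x2 x3 k α) * (Y2*H3 y2 y3 k α - Y3*H2 y2 k) = s * Q * Q := by
        rw [← hDs, hQdef]; ring
      field_simp
      linarith
    · apply ContDiff.contDiffOn
      fun_prop
    · have hdv : HasDerivAt (fun t : ℝ => k * t + α*t^2 + β*t^3 + δ*t^4)
          (k*1 + α*((2:ℕ)*0^(2-1)*1) + β*((3:ℕ)*0^(3-1)*1) + δ*((4:ℕ)*0^(4-1)*1)) 0 :=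
        ((((hasDerivAt_id (0:ℝ)).const_mul k).add (((hasDerivAt_id (0:ℝ)).pow 2).const_mul α)).add
          (((hasDerivAt_id (0:ℝ)).pow 3).const_mul β)).add
          (((hasDerivAt_id (0:ℝ)).pow 4).const_mul δ)
      rw [hdv.deriv]
      norm_num
      exact hk
    · rw [main_iff γ₁ γ₂ _ _ _ _ _ _ x0 x2 x3 x4 x5 y0 y2 y3 y4 y5 X0 X2 X3 X4 X5 Y0 Y2 Y3 Y4 Y5
        k α β δ hX hY hx hy (by simp [isLittleO_zero])]
      exact ⟨⟨by ring, c2.1, c3.1, c4.1, c5.1⟩, ⟨by ring, c2.2, c3.2, c4.2, c5.2⟩⟩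
  · rintro ⟨a, b, c, d, v, hdet, ε, hε, u, hu, hu0, hu1, hT⟩
    obtain ⟨α, β, δ, hu'⟩ := taylor_u u ε hε hu hu0
    rw [main_iff γ₁ γ₂ u a b c d v x0 x2 x3 x4 x5 y0 y2 y3 y4 y5 X0 X2 X3 X4 X5 Y0 Y2 Y3 Y4 Y5
      _ α β δ hX hY hx hy hu'] at hT
    obtain ⟨⟨-, e2, e3, e4, e5⟩, -, e2', e3', e4', e5'⟩ := hT
    have hk := hu1
    have hdet2 : (a*d-b*c)^2 = 1 := by rw [← sq_abs, hdet]; norm_num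
    have hDD : |X2*Y3-Y2*X3| = (deriv u 0)^5 * |x2*y3-y2*x3| := by
      have : X2*Y3-Y2*X3 = (a*d-b*c) * ((deriv u 0)^5 * (x2*y3-y2*x3)) := by
        rw [← e2, ← e3, ← e2', ← e3']; simp only [H2, H3]; ring
      rw [this, abs_mul, hdet, one_mul, abs_mul, abs_of_pos (pow_pos hk 5)]
    have hN : NN X2 X3 X4 X5 Y2 Y3 Y4 Y5 = (deriv u 0)^12 * NN x2 x3 x4 x5 y2 y3 y4 y5 := by
      rw [← e2, ← e3, ← e4, ← e5, ← e2', ← e3', ← e4', ← e5', NN_lin, hdet2, one_mul, NN_H]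
    rw [hDD, hN, Real.mul_rpow (by positivity) (by positivity), hpow _ hk]
    exact mul_div_mul_left _ _ (by positivity)
end
end

section
/- Let γ : ℝ → ℝ² be a C^∞ curve with a 3/2-cusp at t = 0, with [γ'(t), γ''(t)] ≠ 0 for t ≠ 0 near 0, and let τ(t) := sgn(t)·|s_A(t)|^{3/5}. Then lim_{t→0} (s_A(t)²·κ_A(t) − 4/25)/τ(t)² = (1/220)·(20/3)^{1/5}·μ_A, where μ_A is the affine cuspidal curvature of γ at t = 0. -/
noncomputable section
open Real Set Filter Topology

/-- second-order expansion of `f` at `0` -/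
def Jet (f : ℝ → ℝ) (a b c : ℝ) : Prop :=
  Tendsto (fun t => (f t - a - b * t) / t ^ 2) (𝓝[≠] (0:ℝ)) (𝓝 c)

lemma tendsto_id0 : Tendsto (fun t : ℝ => t) (𝓝[≠] (0:ℝ)) (𝓝 0) :=
  tendsto_nhdsWithin_of_tendsto_nhds tendsto_id

lemma Jet.congr {f g : ℝ → ℝ} {a b c : ℝ} (h : Jet f a b c)
    (e : ∀ᶠ t in 𝓝[≠] (0:ℝ), f t = g t) : Jet g a b c := by
  refine Tendsto.congr' ?_ h
  filter_upwards [e] with t ht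
  rw [ht]

lemma Jet.tendsto {f : ℝ → ℝ} {a b c : ℝ} (h : Jet f a b c) :
    Tendsto f (𝓝[≠] (0:ℝ)) (𝓝 a) := by
  have h1 : Tendsto (fun t => a + b * t + t ^ 2 * ((f t - a - b * t) / t ^ 2))
      (𝓝[≠] (0:ℝ)) (𝓝 (a + b * 0 + 0 ^ 2 * c)) :=
    (tendsto_const_nhds.add (tendsto_id0.const_mul b)).add ((tendsto_id0.pow 2).mul h)
  have h2 : a + b * 0 + 0 ^ 2 * c = a := by ring
  rw [h2] at h1
  refine h1.congr' ?_
  filter_upwards [self_mem_nhdsWithin] with t ht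
  have ht : t ≠ 0 := ht
  field_simp
  ring

lemma Jet.add {f g : ℝ → ℝ} {a b c a' b' c' : ℝ} (hf : Jet f a b c) (hg : Jet g a' b' c') :
    Jet (fun t => f t + g t) (a + a') (b + b') (c + c') := by
  refine (Tendsto.add hf hg).congr fun t => ?_
  ring

lemma Jet.const_mul {f : ℝ → ℝ} {a b c : ℝ} (k : ℝ) (hf : Jet f a b c) :
    Jet (fun t => k * f t) (k * a) (k * b) (k * c) := by
  refine (Tendsto.const_mul k hf).congr fun t => ?_
  ring

lemma Jet.mul {f g : ℝ → ℝ} {a b c a' b' c' : ℝ} (hf : Jet f a b c) (hg : Jet g a' b' c') :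
    Jet (fun t => f t * g t) (a * a') (a * b' + b * a') (a * c' + b * b' + c * a') := by
  unfold Jet at hf hg
  have h1 := (((hg.const_mul a).add (hf.mul_const a')).add
    (tendsto_const_nhds (x := b * b'))).add
    ((tendsto_id0.mul ((hg.const_mul b).add (hf.const_mul b'))).add
      ((tendsto_id0.pow 2).mul (Tendsto.mul hf hg)))
  have h2 : a * c' + b * b' + c * a' = a * c' + c * a' + b * b' +
    (0 * (b * c' + b' * c) + 0 ^ 2 * (c * c')) := by ring
  unfold Jet
  rw [h2]
  refine h1.congr' ?_
  filter_upwards [self_mem_nhdsWithin] with t ht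
  have ht : t ≠ 0 := ht
  field_simp
  ring

/-- Integration step for expansions -/
lemma lhop {F F' : ℝ → ℝ} (hF : ∀ t, HasDerivAt F (F' t) t) (h0 : F 0 = 0) (n : ℕ) {c : ℝ}
    (h : Tendsto (fun t => F' t / t ^ n) (𝓝[≠] (0:ℝ)) (𝓝 c)) :
    Tendsto (fun t => F t / t ^ (n + 1)) (𝓝[≠] (0:ℝ)) (𝓝 (c / (n + 1))) := by
  have hn : (n : ℝ) + 1 ≠ 0 := by positivity
  refine HasDerivAt.lhopital_zero_nhdsNE (f' := F') (g' := fun t => ((n:ℝ) + 1) * t ^ n)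
    (Eventually.of_forall hF) (Eventually.of_forall fun t => ?_) ?_ ?_ ?_ ?_
  · have := hasDerivAt_pow (n + 1) t
    simpa using this
  · filter_upwards [self_mem_nhdsWithin] with t ht
    have ht : t ≠ 0 := ht
    positivity
  · have := (hF 0).continuousAt.tendsto
    rw [h0] at this
    exact tendsto_nhdsWithin_of_tendsto_nhds this
  · have := tendsto_id0.pow (n + 1)
    simpa using this
  · refine (h.div_const ((n:ℝ) + 1)).congr fun t => ?_
    rw [div_div, mul_comm]

lemma tend_cont {F : ℝ → ℝ} (hF : Continuous F) :
    Tendsto F (𝓝[≠] (0:ℝ)) (𝓝 (F 0)) :=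
  tendsto_nhdsWithin_of_tendsto_nhds hF.continuousAt.tendsto

lemma jet_smooth {f f1 f2 : ℝ → ℝ} (h0 : ∀ t, HasDerivAt f (f1 t) t)
    (h1 : ∀ t, HasDerivAt f1 (f2 t) t) (h2 : Continuous f2) :
    Jet f (f 0) (f1 0) (f2 0 / 2) := by
  have e1 : Tendsto (fun t => (f1 t - f1 0) / t ^ (0 + 1)) (𝓝[≠] (0:ℝ))
      (𝓝 (f2 0 / ((0:ℕ) + 1))) := by
    refine lhop (F' := f2) (fun t => (h1 t).sub_const _) (by simp) 0 ?_
    simpa using tend_cont h2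
  have e2 := lhop (F := fun t => f t - f 0 - f1 0 * t) (F' := fun t => f1 t - f1 0)
    (fun t => HasDerivAt.congr_deriv
      (((h0 t).sub_const (f 0)).sub ((hasDerivAt_id t).const_mul (f1 0))) (by ring))
    (by simp) 1 (by simpa using e1)
  unfold Jet
  convert e2 using 2
  norm_num

/-- expansions of `f / t` -/
lemma jet_smooth1 {f f1 f2 f3 : ℝ → ℝ} (h0 : ∀ t, HasDerivAt f (f1 t) t)
    (h1 : ∀ t, HasDerivAt f1 (f2 t) t) (h2 : ∀ t, HasDerivAt f2 (f3 t) t)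
    (h3 : Continuous f3) (z : f 0 = 0) :
    Jet (fun t => f t / t) (f1 0) (f2 0 / 2) (f3 0 / 6) := by
  have e1 := jet_smooth h1 h2 h3
  have e2 := lhop (F := fun t => f t - f1 0 * t - f2 0 / 2 * t ^ 2)
    (F' := fun t => f1 t - f1 0 - f2 0 * t)
    (fun t => by
      have := ((h0 t).sub ((hasDerivAt_id t).const_mul (f1 0))).sub
        ((hasDerivAt_pow 2 t).const_mul (f2 0 / 2))
      refine HasDerivAt.congr_deriv this ?_
      push_cast; ring)
    (by simp [z]) 2 e1
  unfold Jet
  convert e2.congr' _ using 2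
  · push_cast; ring
  · filter_upwards [self_mem_nhdsWithin] with t ht
    have ht : t ≠ 0 := ht
    field_simp
    ring

/-- expansions of `f / t^2` -/
lemma jet_smooth2 {f f1 f2 f3 f4 : ℝ → ℝ} (h0 : ∀ t, HasDerivAt f (f1 t) t)
    (h1 : ∀ t, HasDerivAt f1 (f2 t) t) (h2 : ∀ t, HasDerivAt f2 (f3 t) t)
    (h3 : ∀ t, HasDerivAt f3 (f4 t) t)
    (h4 : Continuous f4) (z : f 0 = 0) (z1 : f1 0 = 0) :
    Jet (fun t => f t / t ^ 2) (f2 0 / 2) (f3 0 / 6) (f4 0 / 24) := by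
  have e0 := jet_smooth1 h1 h2 h3 h4 z1
  have e1 : Tendsto (fun t => (f1 t - f2 0 * t - f3 0 / 2 * t ^ 2) / t ^ 3) (𝓝[≠] (0:ℝ))
      (𝓝 (f4 0 / 6)) := by
    refine Tendsto.congr' ?_ e0
    filter_upwards [self_mem_nhdsWithin] with t ht
    have ht : t ≠ 0 := ht
    field_simp
  have e2 := lhop (F := fun t => f t - f2 0 / 2 * t ^ 2 - f3 0 / 6 * t ^ 3)
    (F' := fun t => f1 t - f2 0 * t - f3 0 / 2 * t ^ 2)
    (fun t => by
      have := ((h0 t).sub ((hasDerivAt_pow 2 t).const_mul (f2 0 / 2))).sub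
        ((hasDerivAt_pow 3 t).const_mul (f3 0 / 6))
      refine HasDerivAt.congr_deriv this ?_
      push_cast; ring)
    (by simp [z]) 3 e1
  unfold Jet
  convert e2.congr' _ using 2
  · push_cast; ring
  · filter_upwards [self_mem_nhdsWithin] with t ht
    have ht : t ≠ 0 := ht
    field_simp
    ring

/-- cube roots -/
lemma Jet.cbrt {g h : ℝ → ℝ} {A B C h0 : ℝ} (hg : Jet g A B C) (p : 0 < h0) (e0 : h0 ^ 3 = A)
    (hh : ∀ᶠ t in 𝓝[≠] (0:ℝ), h t ^ 3 = g t)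
    (hl : Tendsto h (𝓝[≠] (0:ℝ)) (𝓝 h0)) :
    Jet h h0 (B / (3 * h0 ^ 2)) ((C - 3 * h0 * (B / (3 * h0 ^ 2)) ^ 2) / (3 * h0 ^ 2)) := by
  set h1 := B / (3 * h0 ^ 2) with hh1
  have hB : B = 3 * h0 ^ 2 * h1 := by rw [hh1]; field_simp
  have lp : Tendsto (fun t => h0 + h1 * t) (𝓝[≠] (0:ℝ)) (𝓝 h0) := by
    have := (tendsto_const_nhds (x := h0)).add (tendsto_id0.const_mul h1)
    simpa using this
  have lS : Tendsto (fun t => h t ^ 2 + h t * (h0 + h1 * t) + (h0 + h1 * t) ^ 2) (𝓝[≠] (0:ℝ))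
      (𝓝 (3 * h0 ^ 2)) := by
    have := ((hl.pow 2).add (hl.mul lp)).add (lp.pow 2)
    convert this using 2; ring
  have lN : Tendsto (fun t => (g t - A - B * t) / t ^ 2 - 3 * h0 * h1 ^ 2 - h1 ^ 3 * t)
      (𝓝[≠] (0:ℝ)) (𝓝 (C - 3 * h0 * h1 ^ 2)) := by
    have := (hg.sub_const (3 * h0 * h1 ^ 2)).sub (tendsto_id0.const_mul (h1 ^ 3))
    simpa using this
  have ne : 3 * h0 ^ 2 ≠ 0 := by positivity
  refine (lN.div lS ne).congr' ?_
  filter_upwards [self_mem_nhdsWithin, hh, lS.eventually_ne ne] with t ht h3 hS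
  have ht : t ≠ 0 := ht
  simp only [Pi.div_apply]
  rw [div_eq_div_iff hS (by positivity), ← h3, ← e0, hB]
  field_simp
  ring

lemma scale_w {w t v : ℝ} (ht : t ≠ 0) (hv : 0 < v) :
    |w| ^ ((1:ℝ)/3) = |t| ^ ((2:ℝ)/3) * v ^ ((2:ℝ)/3) * |w / (t * v) ^ 2| ^ ((1:ℝ)/3) := by
  have h1 : |w| = (|t| * v) ^ (2:ℝ) * |w / (t * v) ^ 2| := by
    rw [abs_div, abs_of_nonneg (sq_nonneg (t * v)), Real.rpow_two, mul_pow, mul_pow, sq_abs]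
    field_simp
  have p : 0 ≤ |t| * v := by positivity
  conv_lhs => rw [h1]
  rw [Real.mul_rpow (by positivity) (by positivity), ← Real.rpow_mul p,
    Real.mul_rpow (by positivity) hv.le]
  norm_num

lemma jet_int {w : ℝ → ℝ} (hw : Continuous w) {h0 h1 h2 : ℝ}
    (hJ : Jet (fun t => |w t / t ^ 2| ^ ((1:ℝ)/3)) h0 h1 h2) :
    Jet (fun t => (∫ u in (0:ℝ)..t, |w u| ^ ((1:ℝ)/3)) / (t * |t| ^ ((2:ℝ)/3)))
      (3/5 * h0) (3/8 * h1) (3/11 * h2) := by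
  unfold Jet at *
  rw [Metric.tendsto_nhdsWithin_nhds] at *
  intro ε hε
  obtain ⟨δ, hδ, H⟩ := hJ (ε / 2) (by positivity)
  refine ⟨δ, hδ, fun {t} ht htd => ?_⟩
  have ht : t ≠ 0 := ht
  have tp : 0 < |t| := abs_pos.mpr ht
  have tpp : 0 < |t| ^ ((2:ℝ)/3) := Real.rpow_pos_of_pos tp _
  have hs : (∫ u in (0:ℝ)..t, |w u| ^ ((1:ℝ)/3)) = t * ∫ v in (0:ℝ)..1, |w (t * v)| ^ ((1:ℝ)/3) := by
    rw [intervalIntegral.mul_integral_comp_mul_left (f := fun u => |w u| ^ ((1:ℝ)/3))]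
    simp
  have hc : Continuous (fun v => |w (t * v)| ^ ((1:ℝ)/3)) :=
    Continuous.rpow_const (by fun_prop) (fun _ => Or.inr (by norm_num))
  have cr : ∀ r : ℝ, 0 < r → Continuous (fun v : ℝ => v ^ r) := fun r hr =>
    Continuous.rpow_const continuous_id (fun _ => Or.inr hr.le)
  have i0 := hc.intervalIntegrable (μ := MeasureTheory.volume) 0 1
  have i1 := (cr (2/3) (by norm_num)).intervalIntegrable (μ := MeasureTheory.volume) 0 1
  have i2 := (cr (5/3) (by norm_num)).intervalIntegrable (μ := MeasureTheory.volume) 0 1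
  have i3 := (cr (8/3) (by norm_num)).intervalIntegrable (μ := MeasureTheory.volume) 0 1
  have key : ((∫ u in (0:ℝ)..t, |w u| ^ ((1:ℝ)/3)) / (t * |t| ^ ((2:ℝ)/3)) - 3/5 * h0
      - 3/8 * h1 * t) / t ^ 2 - 3/11 * h2 = ∫ v in (0:ℝ)..1,
        (|w (t * v)| ^ ((1:ℝ)/3) * (1 / (|t| ^ ((2:ℝ)/3) * t ^ 2))
          - v ^ ((2:ℝ)/3) * (h0 / t ^ 2) - v ^ ((5:ℝ)/3) * (h1 / t) - v ^ ((8:ℝ)/3) * h2) := by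
    rw [intervalIntegral.integral_sub (((i0.mul_const _).sub (i1.mul_const _)).sub
        (i2.mul_const _)) (i3.mul_const _),
      intervalIntegral.integral_sub ((i0.mul_const _).sub (i1.mul_const _)) (i2.mul_const _),
      intervalIntegral.integral_sub (i0.mul_const _) (i1.mul_const _),
      intervalIntegral.integral_mul_const, intervalIntegral.integral_mul_const,
      intervalIntegral.integral_mul_const, intervalIntegral.integral_mul_const,
      integral_rpow (Or.inl (by norm_num)), integral_rpow (Or.inl (by norm_num)),
      integral_rpow (Or.inl (by norm_num)), hs]
    rw [Real.one_rpow, Real.one_rpow, Real.one_rpow, Real.zero_rpow (by norm_num),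
      Real.zero_rpow (by norm_num), Real.zero_rpow (by norm_num)]
    field_simp
    ring
  rw [Real.dist_eq, key, ← Real.norm_eq_abs]
  refine lt_of_le_of_lt (intervalIntegral.norm_integral_le_of_norm_le_const (C := ε / 2) ?_) ?_
  · intro v hv
    rw [uIoc_of_le zero_le_one] at hv
    have hv0 := hv.1
    have htv : t * v ≠ 0 := mul_ne_zero ht hv0.ne'
    have hd : dist (t * v) 0 < δ := by
      rw [Real.dist_eq, sub_zero] at *
      rw [abs_mul, abs_of_pos hv0]
      exact lt_of_le_of_lt (mul_le_of_le_one_right (abs_nonneg t) hv.2) htd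
    have hb := H (x := t * v) htv hd
    rw [Real.dist_eq] at hb
    have v5 : v ^ ((5:ℝ)/3) = v ^ ((2:ℝ)/3) * v := by
      rw [← Real.rpow_add_one hv0.ne']; norm_num
    have v8 : v ^ ((8:ℝ)/3) = v ^ ((2:ℝ)/3) * v ^ 2 := by
      rw [← Real.rpow_two, ← Real.rpow_add hv0]; norm_num
    have le8 : v ^ ((8:ℝ)/3) ≤ 1 := Real.rpow_le_one hv0.le hv.2 (by norm_num)
    have p8 : 0 ≤ v ^ ((8:ℝ)/3) := Real.rpow_nonneg hv0.le _
    have : (|w (t * v)| ^ ((1:ℝ)/3) * (1 / (|t| ^ ((2:ℝ)/3) * t ^ 2))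
          - v ^ ((2:ℝ)/3) * (h0 / t ^ 2) - v ^ ((5:ℝ)/3) * (h1 / t) - v ^ ((8:ℝ)/3) * h2)
        = v ^ ((8:ℝ)/3) * ((|w (t * v) / (t * v) ^ 2| ^ ((1:ℝ)/3) - h0 - h1 * (t * v))
          / (t * v) ^ 2 - h2) := by
      rw [scale_w (w := w (t * v)) ht hv0, v5, v8]
      field_simp
    rw [this, Real.norm_eq_abs, abs_mul, abs_of_nonneg p8]
    calc _ ≤ 1 * (ε / 2) := by gcongr
      _ = ε / 2 := one_mul _
  · simp; linarith

lemma final_const {D M : ℝ} (hD : D ≠ 0) :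
    27 * M / 4400 / (9 * (D / 2) ^ 2 * (3/5 * (|D| / 2) ^ ((1:ℝ)/3)) ^ ((6:ℝ)/5))
      = (1/220) * ((20:ℝ)/3) ^ ((1:ℝ)/5) * (M / |D| ^ ((12:ℝ)/5)) := by
  have p : 0 < |D| := abs_pos.mpr hD
  have e1 : |D| ^ ((12:ℝ)/5) = D ^ 2 * |D| ^ ((2:ℝ)/5) := by
    rw [← sq_abs, ← Real.rpow_two, ← Real.rpow_add p]; norm_num
  have e2 : (3/5 * (|D| / 2) ^ ((1:ℝ)/3)) ^ ((6:ℝ)/5)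
      = (3/5) ^ ((6:ℝ)/5) / 2 ^ ((2:ℝ)/5) * |D| ^ ((2:ℝ)/5) := by
    rw [Real.mul_rpow (by norm_num) (by positivity), ← Real.rpow_mul (by positivity),
      Real.div_rpow p.le (by norm_num)]
    norm_num
    ring
  have e3 : ((20:ℝ)/3) ^ ((1:ℝ)/5) * (3/5) ^ ((6:ℝ)/5) = 3/5 * 2 ^ ((2:ℝ)/5) := by
    have : ((6:ℝ)/5) = 1 + 1/5 := by norm_num
    rw [this, Real.rpow_add (by norm_num), Real.rpow_one]
    have : ((2:ℝ)/5) = 2 * (1/5) := by norm_num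
    rw [this, Real.rpow_mul (by norm_num), mul_left_comm, ← Real.mul_rpow (by norm_num) (by norm_num)]
    norm_num
  have p2 : 0 < |D| ^ ((2:ℝ)/5) := Real.rpow_pos_of_pos p _
  have p3 : 0 < (3/5 : ℝ) ^ ((6:ℝ)/5) := Real.rpow_pos_of_pos (by norm_num) _
  have p4 : 0 < (2 : ℝ) ^ ((2:ℝ)/5) := Real.rpow_pos_of_pos (by norm_num) _
  rw [e1, e2]
  have e4 : ((20:ℝ)/3) ^ ((1:ℝ)/5) = 3/5 * 2 ^ ((2:ℝ)/5) / (3/5) ^ ((6:ℝ)/5) := by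
    rw [eq_div_iff p3.ne', e3]
  rw [e4]
  field_simp
  ring

/-- At a 3/2-cusp, `lim_{t→0} ((s_A)²κ_A − 4/25)/τ² = (1/220)·(20/3)^{1/5}·μ_A`,
where `τ = sgn(t)·|s_A(t)|^{3/5}`. -/
theorem stmt_9 (γ : ℝ → ℝ × ℝ) (hγ : ContDiff ℝ (⊤:ℕ∞) γ) (hcusp : HasCusp γ)
    (hreg : ∀ᶠ t in 𝓝[≠] (0:ℝ), det2 (deriv γ t) (iteratedDeriv 2 γ t) ≠ 0) :
    Tendsto (fun t => (sA γ t ^ 2 * kappaA γ t - 4/25)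
        / (Real.sign t * |sA γ t| ^ ((3:ℝ)/5)) ^ 2)
      (𝓝[≠] (0:ℝ)) (𝓝 ((1/220) * ((20:ℝ)/3) ^ ((1:ℝ)/5) * muA γ)) := by
  obtain ⟨hz, hD⟩ := hcusp
  set c : ℕ → ℝ → ℝ × ℝ := fun n => iteratedDeriv n γ with hc
  have hc1 : deriv γ = c 1 := by rw [hc]; simp [iteratedDeriv_one]
  have hdc : ∀ n t, HasDerivAt (c n) (c (n + 1) t) t := by
    intro n t
    have h1 : Differentiable ℝ (iteratedDeriv n γ) :=
      hγ.differentiable_iteratedDeriv n (by exact_mod_cast WithTop.coe_lt_top _)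
    have := (h1 t).hasDerivAt
    simpa [hc, iteratedDeriv_succ] using this
  have hd : ∀ i j t, HasDerivAt (fun t => det2 (c i t) (c j t))
      (det2 (c (i+1) t) (c j t) + det2 (c i t) (c (j+1) t)) t := by
    intro i j t
    have a1 : HasDerivAt (fun t => (c i t).1) (c (i+1) t).1 t := (hdc i t).fst
    have a2 : HasDerivAt (fun t => (c i t).2) (c (i+1) t).2 t := (hdc i t).snd
    have b1 : HasDerivAt (fun t => (c j t).1) (c (j+1) t).1 t := (hdc j t).fst
    have b2 : HasDerivAt (fun t => (c j t).2) (c (j+1) t).2 t := (hdc j t).snd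
    refine HasDerivAt.congr_deriv ((a1.mul b2).sub (a2.mul b1)) ?_
    simp only [det2]; ring
  have hcont : ∀ i j, Continuous (fun t => det2 (c i t) (c j t)) := fun i j =>
    continuous_iff_continuousAt.mpr fun t => (hd i j t).continuousAt
  have hself : ∀ a : ℝ × ℝ, det2 a a = 0 := fun a => by simp only [det2]; ring
  have z1 : c 1 0 = 0 := by rw [← hc1]; exact hz
  have zl : ∀ a : ℝ × ℝ, det2 0 a = 0 := fun a => by simp [det2]
  have w0 : ∀ t, HasDerivAt (fun t => det2 (c 1 t) (c 2 t)) (det2 (c 1 t) (c 3 t)) t := by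
    intro t; convert hd 1 2 t using 1; rw [hself]; simp
  have w1 : ∀ t, HasDerivAt (fun t => det2 (c 1 t) (c 3 t))
      (det2 (c 2 t) (c 3 t) + det2 (c 1 t) (c 4 t)) t := fun t => hd 1 3 t
  have w2 : ∀ t, HasDerivAt (fun t => det2 (c 2 t) (c 3 t) + det2 (c 1 t) (c 4 t))
      (2 * det2 (c 2 t) (c 4 t) + det2 (c 1 t) (c 5 t)) t := by
    intro t
    refine HasDerivAt.congr_deriv ((hd 2 3 t).add (hd 1 4 t)) ?_
    simp only [hself]; ring
  have w3 : ∀ t, HasDerivAt (fun t => 2 * det2 (c 2 t) (c 4 t) + det2 (c 1 t) (c 5 t))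
      (2 * (det2 (c 3 t) (c 4 t) + det2 (c 2 t) (c 5 t)) +
        (det2 (c 2 t) (c 5 t) + det2 (c 1 t) (c 6 t))) t :=
    fun t => ((hd 2 4 t).const_mul 2).add (hd 1 5 t)
  have w4 : Continuous (fun t => 2 * (det2 (c 3 t) (c 4 t) + det2 (c 2 t) (c 5 t)) +
        (det2 (c 2 t) (c 5 t) + det2 (c 1 t) (c 6 t))) :=
    (((hcont 3 4).add (hcont 2 5)).const_mul 2).add ((hcont 2 5).add (hcont 1 6))
  have jg := jet_smooth2 w0 w1 w2 w3 w4 (by simp [z1, zl]) (by simp [z1, zl])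
  have jw := jet_smooth1 w1 w2 w3 w4 (by simp [z1, zl])
  have ju := jet_smooth (hd 1 4) (fun t => (hd 2 4 t).add (hd 1 5 t))
    (((hcont 3 4).add (hcont 2 5)).add ((hcont 2 5).add (hcont 1 6)))
  have v1 : ∀ t, HasDerivAt (fun t => det2 (c 2 t) (c 3 t)) (det2 (c 2 t) (c 4 t)) t := by
    intro t; convert hd 2 3 t using 1; rw [hself]; simp
  have jv := jet_smooth v1 (hd 2 4) ((hcont 3 4).add (hcont 2 5))
  simp only [z1, zl] at jg jw ju jv
  change det2 (c 2 0) (c 3 0) ≠ 0 at hD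
  have hmu : muA γ = (24 * det2 (c 2 0) (c 3 0) * det2 (c 2 0) (c 5 0)
      + 60 * det2 (c 2 0) (c 3 0) * det2 (c 3 0) (c 4 0) - 35 * det2 (c 2 0) (c 4 0) ^ 2)
      / |det2 (c 2 0) (c 3 0)| ^ ((12:ℝ)/5) := rfl
  rw [hmu]
  generalize det2 (c 2 0) (c 3 0) = D at *
  generalize det2 (c 2 0) (c 4 0) = E at *
  generalize det2 (c 2 0) (c 5 0) = F at *
  generalize det2 (c 3 0) (c 4 0) = G at *
  set g : ℝ → ℝ := fun t => det2 (c 1 t) (c 2 t) / t ^ 2 with hg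
  set h : ℝ → ℝ := fun t => |g t| ^ ((1:ℝ)/3) with hh
  set h0 : ℝ := (|D| / 2) ^ ((1:ℝ)/3) with hh0
  have pD : 0 < |D| := abs_pos.mpr hD
  have ph0 : 0 < h0 := Real.rpow_pos_of_pos (by positivity) _
  obtain ⟨σ, hσ2, hσD⟩ : ∃ σ : ℝ, σ ^ 2 = 1 ∧ |D| = σ * D := by
    rcases lt_or_gt_of_ne hD with hn | hp
    · exact ⟨-1, by norm_num, by rw [abs_of_neg hn]; ring⟩
    · exact ⟨1, by norm_num, by rw [abs_of_pos hp]; ring⟩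
  have hσ : σ = 1 ∨ σ = -1 := by
    have : (σ - 1) * (σ + 1) = 0 := by linear_combination hσ2
    rcases mul_eq_zero.mp this with h | h
    · left; linarith
    · right; linarith
  have hh03 : h0 ^ 3 = σ * (D / 2) := by
    rw [hh0, ← Real.rpow_natCast, ← Real.rpow_mul (by positivity), hσD]; norm_num; ring
  have lg : Tendsto g (𝓝[≠] (0:ℝ)) (𝓝 (D / 2)) := by simpa using jg.tendsto
  have habs : ∀ᶠ t in 𝓝[≠] (0:ℝ), |g t| = σ * g t := by
    have l2 : Tendsto (fun t => σ * g t) (𝓝[≠] (0:ℝ)) (𝓝 (σ * (D / 2))) := lg.const_mul σ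
    have pp : 0 < σ * (D / 2) := by rw [← hh03]; positivity
    filter_upwards [l2.eventually_const_lt pp] with t ht
    rcases hσ with rfl | rfl
    · rw [abs_of_pos (by linarith)]; ring
    · rw [abs_of_neg (by linarith)]; ring
  have hcube : ∀ t, h t ^ 3 = |g t| := by
    intro t
    simp only [hh]
    rw [← Real.rpow_natCast, ← Real.rpow_mul (abs_nonneg _)]; norm_num
  have lh : Tendsto h (𝓝[≠] (0:ℝ)) (𝓝 h0) := by
    have := (lg.abs).rpow_const (p := (1:ℝ)/3) (Or.inr (by norm_num))
    rw [abs_div, abs_two] at this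
    exact this
  have jh := (jg.const_mul σ).cbrt ph0 (by rw [hh03]; ring)
    (habs.mono fun t ht => by rw [hcube, ht]) lh
  have jk := jet_int (hcont 1 2) jh
  set k : ℝ → ℝ := fun t => (∫ u in (0:ℝ)..t, |det2 (c 1 u) (c 2 u)| ^ ((1:ℝ)/3))
    / (t * |t| ^ ((2:ℝ)/3)) with hk
  have jQ := (((jg.mul ju).const_mul 3).add ((jg.mul jv).const_mul 12)).add
    ((jw.mul jw).const_mul (-5))
  have jN := ((jk.mul jk).mul jQ).add (((jg.mul jg).mul (jh.mul jh)).const_mul (-36/25))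
  have lk : Tendsto k (𝓝[≠] (0:ℝ)) (𝓝 (3/5 * h0)) := jk.tendsto
  have lden : Tendsto (fun t => 9 * g t ^ 2 * h t ^ 2 * |k t| ^ ((6:ℝ)/5)) (𝓝[≠] (0:ℝ))
      (𝓝 (9 * (D / 2) ^ 2 * h0 ^ 2 * (3/5 * h0) ^ ((6:ℝ)/5))) := by
    have := (((lg.pow 2).const_mul 9).mul (lh.pow 2)).mul
      (lk.abs.rpow_const (p := (6:ℝ)/5) (Or.inr (by norm_num)))
    rwa [abs_of_pos (by positivity : 0 < 3/5 * h0)] at this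
  have hdne : 9 * (D / 2) ^ 2 * h0 ^ 2 * (3/5 * h0) ^ ((6:ℝ)/5) ≠ 0 := by positivity
  have hDs : D = 2 * σ * h0 ^ 3 := by rw [hh03]; linear_combination (-D) * hσ2
  set M := 24 * D * F + 60 * D * G - 35 * E ^ 2 with hM
  have jN' : Jet (fun t => k t * k t * (3 * (g t * det2 (c 1 t) (c 4 t))
      + 12 * (g t * det2 (c 2 t) (c 3 t))
      + -5 * (det2 (c 1 t) (c 3 t) / t * (det2 (c 1 t) (c 3 t) / t)))
      + -36/25 * (g t * g t * (h t * h t))) 0 0 (27 * M / 4400 * h0 ^ 2) := by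
    convert jN using 1
    · clear_value h0
      rw [hDs]
      rcases hσ with rfl | rfl <;> ring
    · clear_value h0
      rw [hDs]
      rcases hσ with rfl | rfl <;> field_simp <;> ring
    · rw [hM]
      clear_value h0
      rw [hDs]
      rcases hσ with rfl | rfl <;> field_simp <;> ring
  have L := Tendsto.div jN' lden hdne
  have hs : ∀ t, sA γ t = ∫ u in (0:ℝ)..t, |det2 (c 1 u) (c 2 u)| ^ ((1:ℝ)/3) := by
    intro t; simp only [sA, hc1]; rfl
  convert L.congr' _ using 2
  · rw [← final_const hD, ← hh0]
    have hX : 0 < (3/5 * h0) ^ ((6:ℝ)/5) := by positivity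
    field_simp
  · filter_upwards [self_mem_nhdsWithin, hreg, lk.eventually_ne (by positivity : 3/5 * h0 ≠ 0)]
      with t ht hw hkt
    have ht : t ≠ 0 := ht
    rw [hc1] at hw
    change det2 (c 1 t) (c 2 t) ≠ 0 at hw
    have tp : 0 < |t| := abs_pos.mpr ht
    have hT : 0 < |t| ^ ((2:ℝ)/3) := Real.rpow_pos_of_pos tp _
    have hsk : sA γ t = k t * (t * |t| ^ ((2:ℝ)/3)) := by
      rw [hs, hk]
      field_simp
    have hden : (Real.sign t * |sA γ t| ^ ((3:ℝ)/5)) ^ 2 = t ^ 2 * |k t| ^ ((6:ℝ)/5) := by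
      have s2 : Real.sign t ^ 2 = 1 := by
        rcases Real.sign_apply_eq_of_ne_zero t ht with h | h <;> rw [h] <;> norm_num
      have a1 : |sA γ t| = |k t| * |t| ^ ((5:ℝ)/3) := by
        rw [hsk, abs_mul, abs_mul, abs_of_pos hT]
        congr 1
        rw [mul_comm, ← Real.rpow_add_one tp.ne']; norm_num
      rw [mul_pow, s2, one_mul, a1, ← Real.rpow_two, ← Real.rpow_mul (by positivity),
        Real.mul_rpow (abs_nonneg _) (by positivity), ← Real.rpow_mul tp.le]
      have b1 : (5:ℝ)/3 * (3/5 * 2) = 2 := by norm_num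
      have b2 : (3:ℝ)/5 * 2 = 6/5 := by norm_num
      rw [b1, b2, Real.rpow_two, sq_abs, mul_comm]
    have hwg : det2 (c 1 t) (c 2 t) = g t * t ^ 2 := by
      simp only [hg]; field_simp
    have hw13 : |det2 (c 1 t) (c 2 t)| ^ ((1:ℝ)/3) = |t| ^ ((2:ℝ)/3) * h t := by
      have := scale_w (w := det2 (c 1 t) (c 2 t)) ht one_pos
      simpa [hh, hg] using this
    have hg0 : g t ≠ 0 := by
      intro h'; rw [h', zero_mul] at hwg; exact hw hwg
    have hht : 0 < h t := Real.rpow_pos_of_pos (abs_pos.mpr hg0) _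
    have hw83 : |det2 (c 1 t) (c 2 t)| ^ ((8:ℝ)/3) =
        (g t * t ^ 2) ^ 2 * (|t| ^ ((2:ℝ)/3) * h t) ^ 2 := by
      rw [← hw13, ← hwg, ← sq_abs (det2 (c 1 t) (c 2 t)), ← Real.rpow_two, ← Real.rpow_two,
        ← Real.rpow_mul (abs_nonneg _), ← Real.rpow_add (abs_pos.mpr hw)]
      norm_num
    have hkap : kappaA γ t = (3 * det2 (c 1 t) (c 2 t) * det2 (c 1 t) (c 4 t)
        + 12 * det2 (c 1 t) (c 2 t) * det2 (c 2 t) (c 3 t) - 5 * det2 (c 1 t) (c 3 t) ^ 2)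
        / (9 * |det2 (c 1 t) (c 2 t)| ^ ((8:ℝ)/3)) := by
      simp only [kappaA, hc1]; rfl
    have hK : 0 < |k t| ^ ((6:ℝ)/5) := Real.rpow_pos_of_pos (abs_pos.mpr hkt) _
    rw [hden, hkap, hw83, hsk, hwg]
    simp only [Pi.div_apply]
    clear_value k g h
    field_simp
    ring
end
end

section
/- Let γ : ℝ → ℝ² be a C^∞ regular curve with a positive generic inflection point at t = 0 (i.e. γ'(0) ≠ 0, [γ'(0), γ''(0)] = 0 and [γ'(0), γ'''(0)] > 0). Then there exist an orientation preserving equi-affine transformation T of ℝ² and a C^∞ change of parameter t = t(u) near u = 0 with t(0) = 0 and dt/du > 0 such that T(γ(t(u))) − (u, u³ + 6^{1/4}·μ_I·u⁴/4) has order higher than u⁴ at u = 0, where μ_I is the affine inflectional curvature of γ at t = 0. -/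
noncomputable section
open Real Set Filter Topology

lemma aux_poly (A B C w p : ℝ) (hp : 0 < p) :
    ∃ t : ℝ → ℝ, ∃ Q1 Q2 g : ℝ → ℝ, ContDiff ℝ (⊤:ℕ∞) t ∧ Continuous Q1 ∧ Continuous Q2 ∧
      Continuous g ∧ (∀ u, t u = u * g u) ∧ g 0 = 1 / p ∧
      (∀ u, p * t u + A * t u ^ 2 + B * t u ^ 3 + C * t u ^ 4 = u + u ^ 5 * Q1 u) ∧
      (∀ u, p ^ 3 * t u ^ 3 + w * t u ^ 4
        = u ^ 3 + (w * p - 3 * p ^ 3 * A) / p ^ 5 * u ^ 4 + u ^ 5 * Q2 u) := by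
  have hp0 : p ≠ 0 := hp.ne'
  obtain ⟨τ1, h1⟩ : ∃ x, x = 1 / p := ⟨_, rfl⟩
  obtain ⟨τ2, h2⟩ : ∃ x, x = -A / p ^ 3 := ⟨_, rfl⟩
  obtain ⟨τ3, h3⟩ : ∃ x, x = (2 * A ^ 2 - p * B) / p ^ 5 := ⟨_, rfl⟩
  obtain ⟨τ4, h4⟩ : ∃ x, x = (5 * p * A * B - p ^ 2 * C - 5 * A ^ 3) / p ^ 7 := ⟨_, rfl⟩
  obtain ⟨f, hf⟩ : ∃ f : ℝ → ℝ, f = fun u => τ3 + τ4 * u := ⟨_, rfl⟩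
  obtain ⟨e, he⟩ : ∃ f : ℝ → ℝ, f = fun u => τ2 + τ3 * u + τ4 * u ^ 2 := ⟨_, rfl⟩
  have hfc : Continuous f := by rw [hf]; fun_prop
  have hec : Continuous e := by rw [he]; fun_prop
  obtain ⟨q2, hq2⟩ : ∃ q : ℝ → ℝ, q = fun u => 2 * τ1 * τ4 + (2 * τ2 * f u + u * f u ^ 2) :=
    ⟨_, rfl⟩
  obtain ⟨q3, hq3⟩ : ∃ q : ℝ → ℝ, q = fun u => 3 * τ1 ^ 2 * f u + 3 * τ1 * e u ^ 2 + u * e u ^ 3 :=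
    ⟨_, rfl⟩
  obtain ⟨q4, hq4⟩ : ∃ q : ℝ → ℝ, q = fun u => e u * (4 * τ1 ^ 3 + 6 * τ1 ^ 2 * u * e u
    + 4 * τ1 * u ^ 2 * e u ^ 2 + u ^ 3 * e u ^ 3) := ⟨_, rfl⟩
  have c2 : Continuous q2 := by rw [hq2]; fun_prop
  have c3 : Continuous q3 := by rw [hq3]; fun_prop
  have c4 : Continuous q4 := by rw [hq4]; fun_prop
  obtain ⟨t, ht⟩ : ∃ t : ℝ → ℝ, t = fun u => τ1 * u + τ2 * u ^ 2 + τ3 * u ^ 3 + τ4 * u ^ 4 :=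
    ⟨_, rfl⟩
  have e2 : ∀ u, t u ^ 2 = τ1 ^ 2 * u ^ 2 + 2 * τ1 * τ2 * u ^ 3 + (τ2 ^ 2 + 2 * τ1 * τ3) * u ^ 4
      + u ^ 5 * q2 u := by
    intro u; rw [ht, hq2, hf]; ring
  have e3 : ∀ u, t u ^ 3 = τ1 ^ 3 * u ^ 3 + 3 * τ1 ^ 2 * τ2 * u ^ 4 + u ^ 5 * q3 u := by
    intro u; rw [ht, hq3, hf, he]; ring
  have e4 : ∀ u, t u ^ 4 = τ1 ^ 4 * u ^ 4 + u ^ 5 * q4 u := by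
    intro u; rw [ht, hq4, he]; ring
  refine ⟨t, fun u => A * q2 u + B * q3 u + C * q4 u, fun u => p ^ 3 * q3 u + w * q4 u,
    fun u => τ1 + u * e u, by rw [ht]; fun_prop, by fun_prop, by fun_prop, by fun_prop,
    fun u => by rw [ht, he]; ring, by simp [h1], fun u => ?_, fun u => ?_⟩
  · rw [e2, e3, e4]
    have k1 : p * τ1 = 1 := by rw [h1]; field_simp
    have k2 : p * τ2 + A * τ1 ^ 2 = 0 := by rw [h1, h2]; field_simp; ring
    have k3 : p * τ3 + A * (2 * τ1 * τ2) + B * τ1 ^ 3 = 0 := by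
      rw [h1, h2, h3]; field_simp; ring
    have k4 : p * τ4 + A * (τ2 ^ 2 + 2 * τ1 * τ3) + B * (3 * τ1 ^ 2 * τ2) + C * τ1 ^ 4 = 0 := by
      rw [h1, h2, h3, h4]; field_simp; ring
    have : t u = τ1 * u + τ2 * u ^ 2 + τ3 * u ^ 3 + τ4 * u ^ 4 := by rw [ht]
    rw [this]
    linear_combination u * k1 + u ^ 2 * k2 + u ^ 3 * k3 + u ^ 4 * k4
  · rw [e3, e4, h1, h2]
    field_simp
    ring

lemma aux_taylor (γ : ℝ → ℝ × ℝ) (hγ : ContDiff ℝ (⊤:ℕ∞) γ) :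
    (fun x => γ x - (γ 0 + x • deriv γ 0 + (x ^ 2 / 2) • iteratedDeriv 2 γ 0
      + (x ^ 3 / 6) • iteratedDeriv 3 γ 0 + (x ^ 4 / 24) • iteratedDeriv 4 γ 0))
      =o[𝓝 0] (fun x : ℝ => x ^ 4) := by
  have h := taylor_isLittleO (f := γ) (n := 4) (s := univ) (x₀ := 0) convex_univ (mem_univ _)
    ((contDiff_infty.1 hγ 4).contDiffOn)
  simp only [taylorWithinEval_succ, taylor_within_zero_eval, iteratedDerivWithin_univ,
    nhdsWithin_univ, sub_zero] at h
  convert h using 3 with x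
  congr 1
  norm_num [Nat.factorial, iteratedDeriv_one, div_eq_inv_mul]

/-- Normal form of a positive generic inflection point: up to an orientation preserving
equi-affine transformation and parameter change, `γ` agrees with
`u ↦ (u, u³ + ⁴√6·μ_I·u⁴/4)` to order higher than `u⁴`. -/
theorem stmt_12 (γ : ℝ → ℝ × ℝ) (hγ : ContDiff ℝ (⊤:ℕ∞) γ)
    (hr : deriv γ 0 ≠ 0)
    (hi : det2 (deriv γ 0) (iteratedDeriv 2 γ 0) = 0)
    (hp : 0 < det2 (deriv γ 0) (iteratedDeriv 3 γ 0)) :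
    ∃ (a b c d : ℝ) (v : ℝ × ℝ), a * d - b * c = 1 ∧
      ∃ ε > (0:ℝ), ∃ t : ℝ → ℝ,
        ContDiffOn ℝ (⊤:ℕ∞) t (Set.Ioo (-ε) ε) ∧ t 0 = 0 ∧ 0 < deriv t 0 ∧
        Tendsto (fun u => (u ^ 4)⁻¹ •
            (applyAff a b c d v (γ (t u))
              - (u, u ^ 3 + (6:ℝ) ^ ((1:ℝ)/4) * muI γ * u ^ 4 / 4)))
          (𝓝[≠] (0:ℝ)) (𝓝 (0 : ℝ × ℝ)) := by
  obtain ⟨p, hp0, hp4⟩ : ∃ p : ℝ, 0 < p ∧ det2 (deriv γ 0) (iteratedDeriv 3 γ 0) = 6 * p ^ 4 := by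
    refine ⟨(det2 (deriv γ 0) (iteratedDeriv 3 γ 0) / 6) ^ ((1:ℝ)/4), by positivity, ?_⟩
    rw [← Real.rpow_natCast, ← Real.rpow_mul (by positivity)]
    norm_num
    ring
  have hmu : (6:ℝ) ^ ((1:ℝ)/4) * muI γ / 4 = (det2 (deriv γ 0) (iteratedDeriv 4 γ 0)
      - 6 * det2 (iteratedDeriv 2 γ 0) (iteratedDeriv 3 γ 0)) / (24 * p ^ 5) := by
    have hs : (6 * p ^ 4 : ℝ) ^ ((5:ℝ)/4) = (6:ℝ) ^ ((1:ℝ)/4) * 6 * p ^ 5 := by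
      rw [Real.mul_rpow (by norm_num) (by positivity), ← Real.rpow_natCast p 4,
        ← Real.rpow_mul hp0.le, ← Real.rpow_natCast p 5]
      have : (6:ℝ) ^ ((5:ℝ)/4) = (6:ℝ) ^ ((1:ℝ)/4) * 6 := by
        rw [show (5:ℝ)/4 = 1/4 + 1 by norm_num, Real.rpow_add (by norm_num), Real.rpow_one]
      rw [this]
      norm_num
    have h6 : (0:ℝ) < (6:ℝ) ^ ((1:ℝ)/4) := by positivity
    unfold muI
    rw [Real.sign_of_pos hp, abs_of_pos hp, hp4, hs]
    field_simp
    ring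
  have hT := aux_taylor γ hγ
  generalize iteratedDeriv 4 γ 0 = G4 at *
  generalize iteratedDeriv 3 γ 0 = G3 at *
  generalize iteratedDeriv 2 γ 0 = G2 at *
  generalize deriv γ 0 = G1 at *
  obtain ⟨x1, y1⟩ := G1
  obtain ⟨x2, y2⟩ := G2
  obtain ⟨x3, y3⟩ := G3
  obtain ⟨x4, y4⟩ := G4
  simp only [det2] at *
  have hN : 0 < x1 ^ 2 + y1 ^ 2 := by
    by_contra hc
    apply hr
    have hx : x1 = 0 := by nlinarith [sq_nonneg x1, sq_nonneg y1]
    have hy : y1 = 0 := by nlinarith [sq_nonneg x1, sq_nonneg y1]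
    simp [hx, hy]
  obtain ⟨a, ha⟩ : ∃ a, a = p * x1 / (x1 ^ 2 + y1 ^ 2) := ⟨_, rfl⟩
  obtain ⟨b, hb⟩ : ∃ b, b = p * y1 / (x1 ^ 2 + y1 ^ 2) := ⟨_, rfl⟩
  obtain ⟨c, hc⟩ : ∃ c, c = -y1 / p := ⟨_, rfl⟩
  obtain ⟨d, hd⟩ : ∃ d, d = x1 / p := ⟨_, rfl⟩
  have hX1 : a * x1 + b * y1 = p := by rw [ha, hb]; field_simp
  have hdet : a * d - b * c = 1 := by
    rw [hc, hd]; field_simp; linarith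
  have hY1 : c * x1 + d * y1 = 0 := by rw [hc, hd]; field_simp; ring
  have hY2 : c * x2 + d * y2 = 0 := by rw [hc, hd]; field_simp; linarith
  have hY3 : c * x3 + d * y3 = 6 * p ^ 3 := by rw [hc, hd]; field_simp; linarith
  have hY4 : c * x4 + d * y4 = (x1 * y4 - y1 * x4) / p := by rw [hc, hd]; field_simp; ring
  have hX2 : p * (x2 * y3 - y2 * x3) = (a * x2 + b * y2) * (6 * p ^ 4) := by
    rw [← hp4]
    linear_combination (-(x2 * y3 - y2 * x3)) * hX1 - (a * x3 + b * y3) * hi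
  obtain ⟨t, Q1, Q2, g, hts, hQ1, hQ2, hg, htg, hg0, hP1, hP2⟩ :=
    aux_poly ((a * x2 + b * y2) / 2) ((a * x3 + b * y3) / 6) ((a * x4 + b * y4) / 24)
      ((c * x4 + d * y4) / 24) p hp0
  have ht0 : t 0 = 0 := by rw [htg]; simp
  have htd : HasDerivAt t (1 / p) 0 := by
    rw [hasDerivAt_iff_tendsto_slope]
    have := (hg.tendsto 0).mono_left (nhdsWithin_le_nhds (s := {0}ᶜ))
    rw [hg0] at this
    refine this.congr' ?_
    filter_upwards [self_mem_nhdsWithin] with u hu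
    have hu : u ≠ 0 := hu
    rw [slope_def_field, ht0, htg]
    field_simp
    simp
  refine ⟨a, b, c, d, (-(a * (γ 0).1 + b * (γ 0).2), -(c * (γ 0).1 + d * (γ 0).2)), hdet,
    1, one_pos, t, hts.contDiffOn, ht0, by rw [htd.deriv]; positivity, ?_⟩
  have htc : Tendsto t (𝓝 0) (𝓝 0) := by
    have := hts.continuous.tendsto 0
    rwa [ht0] at this
  have hO : (fun u => t u ^ 4) =O[𝓝 0] (fun u : ℝ => u ^ 4) := by
    have h1 : t =O[𝓝 0] (fun u : ℝ => u) := by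
      have := htd.differentiableAt.isBigO_sub
      simpa [ht0] using this
    exact h1.pow 4
  have hR := (hT.comp_tendsto htc).trans_isBigO hO
  have hR' := (hR.mono (nhdsWithin_le_nhds (s := {0}ᶜ)))
  obtain ⟨R, hRdef⟩ : ∃ R : ℝ → ℝ × ℝ, R = fun x => γ x - (γ 0 + x • (x1, y1) +
    (x ^ 2 / 2) • (x2, y2) + (x ^ 3 / 6) • (x3, y3) + (x ^ 4 / 24) • (x4, y4)) := ⟨_, rfl⟩
  rw [← hRdef] at hR'
  have hL : Tendsto (fun u => (u ^ 4)⁻¹ • R (t u)) (𝓝[≠] 0) (𝓝 0) := by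
    have := hR'.norm_right.norm_left.tendsto_div_nhds_zero
    rw [tendsto_zero_iff_norm_tendsto_zero]
    refine this.congr fun u => ?_
    simp only [Function.comp, norm_smul, norm_inv]
    rw [div_eq_inv_mul]
  have hL1 : Tendsto (fun u => (u ^ 4)⁻¹ * (R (t u)).1) (𝓝[≠] 0) (𝓝 0) :=
    (continuous_fst.tendsto (0 : ℝ × ℝ)).comp hL
  have hL2 : Tendsto (fun u => (u ^ 4)⁻¹ * (R (t u)).2) (𝓝[≠] 0) (𝓝 0) :=
    (continuous_snd.tendsto (0 : ℝ × ℝ)).comp hL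
  have hq : ∀ Q : ℝ → ℝ, Continuous Q → Tendsto (fun u => u * Q u) (𝓝[≠] 0) (𝓝 0) := by
    intro Q hQ
    have := ((continuous_id.mul hQ).tendsto 0).mono_left (nhdsWithin_le_nhds (s := {0}ᶜ))
    simpa [Pi.mul_def] using this
  have hcoef : (6:ℝ) ^ ((1:ℝ)/4) * muI γ / 4 = ((c * x4 + d * y4) / 24 * p
      - 3 * p ^ 3 * ((a * x2 + b * y2) / 2)) / p ^ 5 := by
    have hX2' : x2 * y3 - y2 * x3 = (a * x2 + b * y2) * (6 * p ^ 3) :=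
      mul_left_cancel₀ hp0.ne' (by rw [hX2]; ring)
    rw [hmu, hY4, hX2']
    field_simp
    ring
  have hF1 := ((hL1.const_mul a).add (hL2.const_mul b)).add (hq Q1 hQ1)
  have hF2 := ((hL1.const_mul c).add (hL2.const_mul d)).add (hq Q2 hQ2)
  have hF := hF1.prodMk_nhds hF2
  have hz : ((a * 0 + b * 0 + 0, c * 0 + d * 0 + 0) : ℝ × ℝ) = 0 := by simp
  rw [hz] at hF
  refine hF.congr' ?_
  filter_upwards [self_mem_nhdsWithin] with u hu
  have hu : u ≠ 0 := hu
  have hp1 := hP1 u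
  have hp2 := hP2 u
  rw [← hcoef] at hp2
  have r1 : (R (t u)).1 = (γ (t u)).1 - ((γ 0).1 + t u * x1 + t u ^ 2 / 2 * x2
      + t u ^ 3 / 6 * x3 + t u ^ 4 / 24 * x4) := by rw [hRdef]; simp
  have r2 : (R (t u)).2 = (γ (t u)).2 - ((γ 0).2 + t u * y1 + t u ^ 2 / 2 * y2
      + t u ^ 3 / 6 * y3 + t u ^ 4 / 24 * y4) := by rw [hRdef]; simp
  refine Prod.ext ?_ ?_
  · simp only [applyAff, Prod.smul_fst, Prod.fst_sub, smul_eq_mul]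
    rw [r1, r2]
    field_simp
    linear_combination 288 * ((-t u) * hX1 - hp1)
  · simp only [applyAff, Prod.smul_snd, Prod.snd_sub, smul_eq_mul]
    rw [r1, r2]
    field_simp
    linear_combination 1152 * ((-t u) * hY1 - t u ^ 2 / 2 * hY2 - t u ^ 3 / 6 * hY3 - hp2)
end
end

section
/- Let γ : ℝ → ℝ² be a C^∞ regular curve with a generic inflection point at t = 0, with [γ'(t), γ''(t)] ≠ 0 for t ≠ 0 near 0, and let F be the C^∞ extension of the normalized affine curvature function (s_A)²·κ_A at t = 0 (as a function of the original parameter t). Then −(9/7)·(([γ'(0), γ⁽⁴⁾(0)] + [γ''(0), γ'''(0)])/[γ'(0), γ'''(0)])·F'(0) + 32·F'(0)² + 9·F''(0) = 0. -/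
noncomputable section
open Real Set Filter Topology

theorem cd_deriv {f : ℝ → ℝ} {x : ℝ} (hf : ContDiffAt ℝ ((⊤:ℕ∞):WithTop ℕ∞) f x) :
    ContDiffAt ℝ ((⊤:ℕ∞):WithTop ℕ∞) (deriv f) x :=
  hf.derivWithin (by simp)

theorem cd_nat {f : ℝ → ℝ} {x : ℝ} (hf : ContDiffAt ℝ ((⊤:ℕ∞):WithTop ℕ∞) f x) (n : ℕ) :
    ContDiffAt ℝ (n : WithTop ℕ∞) f x :=
  hf.of_le (by exact_mod_cast le_top)

theorem mul_one' {f g : ℝ → ℝ} {x : ℝ} (hf : ContDiffAt ℝ ((⊤:ℕ∞):WithTop ℕ∞) f x)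
    (hg : ContDiffAt ℝ ((⊤:ℕ∞):WithTop ℕ∞) g x) :
    iteratedDeriv 1 (fun t => f t * g t) x =
      iteratedDeriv 1 f x * g x + f x * iteratedDeriv 1 g x := by
  rw [iteratedDeriv_fun_mul (cd_nat hf 1) (cd_nat hg 1)]
  simp [Finset.sum_range_succ]
  ring

theorem mul_two' {f g : ℝ → ℝ} {x : ℝ} (hf : ContDiffAt ℝ ((⊤:ℕ∞):WithTop ℕ∞) f x)
    (hg : ContDiffAt ℝ ((⊤:ℕ∞):WithTop ℕ∞) g x) :
    iteratedDeriv 2 (fun t => f t * g t) x =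
      iteratedDeriv 2 f x * g x + 2 * iteratedDeriv 1 f x * iteratedDeriv 1 g x
        + f x * iteratedDeriv 2 g x := by
  rw [iteratedDeriv_fun_mul (cd_nat hf 2) (cd_nat hg 2)]
  simp [Finset.sum_range_succ]
  ring

theorem abs_third_deriv {d : ℝ → ℝ} {d' t : ℝ} (hd : HasDerivAt d d' t) (h0 : d t ≠ 0) :
    HasDerivAt (fun u => d u * |d u| ^ ((1:ℝ)/3)) ((4/3) * d' * |d t| ^ ((1:ℝ)/3)) t := by
  have h1 : HasDerivAt (fun u => |d u|) ((SignType.sign (d t) : ℝ) * d') t :=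
    (hasDerivAt_abs h0).comp t hd
  have h2 := hd.mul (h1.rpow_const (p := (1:ℝ)/3) (Or.inl (abs_ne_zero.mpr h0)))
  refine h2.congr_deriv ?_
  have h3 : d t * (SignType.sign (d t) : ℝ) = |d t| := self_mul_sign (d t)
  have h4 : |d t| ^ ((1:ℝ)/3) = |d t| * |d t| ^ ((1:ℝ)/3 - 1) := by
    rw [Real.rpow_sub_one (abs_ne_zero.mpr h0)]
    field_simp [abs_ne_zero.mpr h0]
  calc _ = d' * |d t| ^ ((1:ℝ)/3)
      + (1/3) * d' * ((d t * (SignType.sign (d t) : ℝ)) * |d t| ^ ((1:ℝ)/3 - 1)) := by ring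
    _ = _ := by rw [h3, ← h4]; ring

theorem core_alg (a b c l k0 k1 k2 f1 f2 : ℝ) (ha : a ≠ 0)
    (h0 : 4/3 * (a * k0) = 1)
    (h1 : a * k1 + 4/3 * (b * k0 + a * k1) = 0)
    (h2 : b * k1 + 2 * a * k2 + 4/3 * (c * k0 + 2 * b * k1 + a * k2) = 0)
    (hf1 : 9 * f1 = 2 * k0 * k1 * (-5 * a^2) + k0^2 * (-7 * a * b + 9 * a * (l * a)))
    (hf2 : 9 * f2 = (2 * k1^2 + 2 * k0 * k2) * (-5 * a^2)
      + 2 * (2 * k0 * k1) * (-7 * a * b + 9 * a * (l * a))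
      + k0^2 * (6 * a * c + 3 * b^2 + 9 * (b * (l * a) + 2 * a * (l * (b - l * a)))
        - 10 * b^2 - 10 * a * c)) :
    -(9/7) * (b / a) * f1 + 32 * f1 ^ 2 + 9 * f2 = 0 := by
  have e0 : k0 = 3 / (4 * a) := by field_simp; linarith
  have e1 : k1 = -(4/7) * b * k0 / a := by field_simp; linarith
  have e2 : k2 = -(3/10) * ((11/3) * b * k1 + (4/3) * c * k0) / a := by field_simp; linarith
  have e3 : f1 = (2 * k0 * k1 * (-5 * a^2) + k0^2 * (-7 * a * b + 9 * a * (l * a))) / 9 := by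
    linarith
  rw [hf2, e3, e2, e1, e0]
  field_simp
  ring

theorem core (d e F s : ℝ → ℝ) (l : ℝ)
    (hd : ContDiff ℝ ((⊤:ℕ∞):WithTop ℕ∞) d) (he : ContDiff ℝ ((⊤:ℕ∞):WithTop ℕ∞) e)
    (hF : ContDiffAt ℝ ((⊤:ℕ∞):WithTop ℕ∞) F 0)
    (hs : ∀ t, HasDerivAt s (|d t| ^ ((1:ℝ)/3)) t)
    (d0 : d 0 = 0) (ha : deriv d 0 ≠ 0)
    (e0 : e 0 = l * deriv d 0)
    (e1 : deriv e 0 = l * (deriv (deriv d) 0 - l * deriv d 0))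
    (hreg : ∀ᶠ t in 𝓝[≠] (0:ℝ), d t ≠ 0)
    (hFeq : ∀ᶠ t in 𝓝[≠] (0:ℝ), F t = s t ^ 2 *
      ((3 * (d t * deriv (deriv d) t) + 9 * (d t * e t) - 5 * (deriv d t * deriv d t))
        / (9 * |d t| ^ ((8:ℝ)/3)))) :
    -(9/7) * (deriv (deriv d) 0 / deriv d 0) * deriv F 0
      + 32 * deriv F 0 ^ 2 + 9 * iteratedDeriv 2 F 0 = 0 := by
  have cd : ContDiffAt ℝ ((⊤:ℕ∞):WithTop ℕ∞) d 0 := hd.contDiffAt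
  have ce : ContDiffAt ℝ ((⊤:ℕ∞):WithTop ℕ∞) e 0 := he.contDiffAt
  have cd1 := cd_deriv cd
  have cd2 := cd_deriv cd1
  set N : ℝ → ℝ := fun t =>
    3 * (d t * deriv (deriv d) t) + 9 * (d t * e t) - 5 * (deriv d t * deriv d t) with hN
  have c1 : ContDiffAt ℝ ((⊤:ℕ∞):WithTop ℕ∞) (fun t => d t * deriv (deriv d) t) 0 := cd.mul cd2
  have c2 : ContDiffAt ℝ ((⊤:ℕ∞):WithTop ℕ∞) (fun t => d t * e t) 0 := cd.mul ce
  have c3 : ContDiffAt ℝ ((⊤:ℕ∞):WithTop ℕ∞) (fun t => deriv d t * deriv d t) 0 := cd1.mul cd1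
  have c1' : ContDiffAt ℝ ((⊤:ℕ∞):WithTop ℕ∞) (fun t => 3 * (d t * deriv (deriv d) t)) 0 :=
    contDiffAt_const.mul c1
  have c2' : ContDiffAt ℝ ((⊤:ℕ∞):WithTop ℕ∞) (fun t => 9 * (d t * e t)) 0 :=
    contDiffAt_const.mul c2
  have c3' : ContDiffAt ℝ ((⊤:ℕ∞):WithTop ℕ∞) (fun t => 5 * (deriv d t * deriv d t)) 0 :=
    contDiffAt_const.mul c3
  have c12 : ContDiffAt ℝ ((⊤:ℕ∞):WithTop ℕ∞)
    (fun t => 3 * (d t * deriv (deriv d) t) + 9 * (d t * e t)) 0 := c1'.add c2'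
  have cN : ContDiffAt ℝ ((⊤:ℕ∞):WithTop ℕ∞) N 0 := c12.sub c3'
  have i1 : ∀ f : ℝ → ℝ, iteratedDeriv 1 f = deriv f := fun f => iteratedDeriv_one
  have i2 : ∀ f : ℝ → ℝ, iteratedDeriv 2 f = deriv (deriv f) := fun f => by
    rw [iteratedDeriv_succ', i1]
  have N0 : N 0 = -5 * deriv d 0 ^ 2 := by simp only [hN, d0]; ring
  have N1 : iteratedDeriv 1 N 0 = -7 * deriv d 0 * deriv (deriv d) 0
      + 9 * deriv d 0 * (l * deriv d 0) := by
    rw [hN, iteratedDeriv_fun_sub (cd_nat c12 1) (cd_nat c3' 1),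
      iteratedDeriv_fun_add (cd_nat c1' 1) (cd_nat c2' 1), iteratedDeriv_const_mul_field,
      iteratedDeriv_const_mul_field, iteratedDeriv_const_mul_field,
      mul_one' cd cd2, mul_one' cd ce, mul_one' cd1 cd1]
    simp only [i1, d0, e0]
    ring
  have N2 : iteratedDeriv 2 N 0 = 6 * deriv d 0 * deriv (deriv (deriv d)) 0
      + 3 * (deriv (deriv d) 0)^2 + 9 * (deriv (deriv d) 0 * (l * deriv d 0)
      + 2 * deriv d 0 * (l * (deriv (deriv d) 0 - l * deriv d 0)))
        - 10 * (deriv (deriv d) 0)^2 - 10 * deriv d 0 * deriv (deriv (deriv d)) 0 := by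
    rw [hN, iteratedDeriv_fun_sub (cd_nat c12 2) (cd_nat c3' 2),
      iteratedDeriv_fun_add (cd_nat c1' 2) (cd_nat c2' 2), iteratedDeriv_const_mul_field,
      iteratedDeriv_const_mul_field, iteratedDeriv_const_mul_field,
      mul_two' cd cd2, mul_two' cd ce, mul_two' cd1 cd1]
    simp only [i1, i2, d0, e0, e1]
    ring
  have hN0 : N 0 ≠ 0 := by
    rw [N0]; exact mul_ne_zero (by norm_num) (pow_ne_zero _ ha)
  -- the function `G = 9 F / N`
  set G : ℝ → ℝ := fun t => 9 * F t / N t with hG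
  have cG : ContDiffAt ℝ ((⊤:ℕ∞):WithTop ℕ∞) G 0 := (contDiffAt_const.mul hF).div cN hN0
  have cG1 := cd_deriv cG
  set K : ℝ → ℝ := fun t => (d t * deriv G t + 8/3 * (deriv d t * G t)) / 2 with hK
  have cK : ContDiffAt ℝ ((⊤:ℕ∞):WithTop ℕ∞) K 0 :=
    ((cd.mul cG1).add (contDiffAt_const.mul (cd1.mul cG))).div_const 2
  have cK1 := cd_deriv cK
  have evN : ∀ᶠ t in 𝓝[≠] (0:ℝ), N t ≠ 0 :=
    (cN.continuousAt.eventually_ne hN0).filter_mono nhdsWithin_le_nhds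
  set h : ℝ → ℝ := fun t => s t / (d t * |d t| ^ ((1:ℝ)/3)) with hh
  have hh' : ∀ t, d t ≠ 0 → HasDerivAt h ((1 - 4/3 * (deriv d t * h t)) / d t) t := by
    intro t ht
    have hdt : HasDerivAt d (deriv d t) t :=
      ((hd.differentiable (by simp)) t).hasDerivAt
    have hp : |d t| ^ ((1:ℝ)/3) ≠ 0 := (Real.rpow_pos_of_pos (abs_pos.mpr ht) _).ne'
    refine ((hs t).div (abs_third_deriv hdt ht) (mul_ne_zero ht hp)).congr_deriv ?_
    simp only [hh]
    generalize |d t| ^ ((1:ℝ)/3) = p at hp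
    field_simp
  have evG : ∀ᶠ t in 𝓝[≠] (0:ℝ), G t = h t ^ 2 := by
    filter_upwards [hreg, evN, hFeq] with t ht hNt hFt
    have hp : 0 < |d t| ^ ((1:ℝ)/3) := Real.rpow_pos_of_pos (abs_pos.mpr ht) _
    have h8 : |d t| ^ ((8:ℝ)/3) = d t ^ 2 * (|d t| ^ ((1:ℝ)/3)) ^ 2 := by
      rw [← sq_abs (d t), ← Real.rpow_natCast, ← Real.rpow_natCast, ← Real.rpow_mul (abs_nonneg _),
        ← Real.rpow_add (abs_pos.mpr ht)]
      norm_num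
    have hFt' : F t = s t ^ 2 * (N t / (9 * |d t| ^ ((8:ℝ)/3))) := hFt
    simp only [hG, hh]
    rw [hFt', h8]
    have hp' := hp.ne'
    generalize |d t| ^ ((1:ℝ)/3) = p at hp'
    field_simp
  have evG' : ∀ᶠ t in 𝓝[≠] (0:ℝ), G =ᶠ[𝓝 t] fun u => h u ^ 2 :=
    eventually_eventually_nhdsWithin.mpr evG |>.mp <| by
      filter_upwards [self_mem_nhdsWithin] with t ht h1
      have : 𝓝[≠] (0:ℝ) ≤ 𝓝[≠] 0 := le_rfl
      have h2 : 𝓝[{(0:ℝ)}ᶜ] t = 𝓝 t := (isOpen_compl_singleton).nhdsWithin_eq ht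
      rwa [h2] at h1
  have evK : ∀ᶠ t in 𝓝[≠] (0:ℝ), K t = h t := by
    filter_upwards [evG', hreg] with t h1 ht
    have h2 : deriv G t = _ := h1.deriv_eq.trans ((hh' t ht).pow 2).deriv
    simp only [hK]
    rw [h2, h1.eq_of_nhds]
    push_cast
    field_simp
    ring
  have evK' : ∀ᶠ t in 𝓝[≠] (0:ℝ), K =ᶠ[𝓝 t] h :=
    eventually_eventually_nhdsWithin.mpr evK |>.mp <| by
      filter_upwards [self_mem_nhdsWithin] with t ht h1
      have h2 : 𝓝[{(0:ℝ)}ᶜ] t = 𝓝 t := (isOpen_compl_singleton).nhdsWithin_eq ht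
      rwa [h2] at h1
  have cA : ContDiffAt ℝ ((⊤:ℕ∞):WithTop ℕ∞) (fun t => d t * deriv K t) 0 := cd.mul cK1
  have cB : ContDiffAt ℝ ((⊤:ℕ∞):WithTop ℕ∞) (fun t => deriv d t * K t) 0 := cd1.mul cK
  have cB' : ContDiffAt ℝ ((⊤:ℕ∞):WithTop ℕ∞) (fun t => 4/3 * (deriv d t * K t)) 0 :=
    contDiffAt_const.mul cB
  have cKK : ContDiffAt ℝ ((⊤:ℕ∞):WithTop ℕ∞) (fun t => K t * K t) 0 := cK.mul cK
  have ode : (fun t => d t * deriv K t + 4/3 * (deriv d t * K t)) =ᶠ[𝓝 0] fun _ => (1:ℝ) := by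
    rw [← (cA.add cB').continuousAt.eventuallyEq_nhds_iff_eventuallyEq_nhdsNE continuousAt_const]
    filter_upwards [evK', hreg] with t h1 ht
    rw [h1.deriv_eq, (hh' t ht).deriv, h1.eq_of_nhds]
    field_simp
    ring
  have FK : (fun t => 9 * F t) =ᶠ[𝓝 0] fun t => (K t * K t) * N t := by
    rw [← (contDiffAt_const.mul hF).continuousAt.eventuallyEq_nhds_iff_eventuallyEq_nhdsNE
      (cKK.mul cN).continuousAt]
    filter_upwards [evK, evG, evN] with t h1 h2 h3
    rw [h1, ← pow_two, ← h2]
    simp only [hG]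
    field_simp
  have o0 := ode.eq_of_nhds
  have o1 := ode.iteratedDeriv_eq 1
  have o2 := ode.iteratedDeriv_eq 2
  have f1 := FK.iteratedDeriv_eq 1
  have f2 := FK.iteratedDeriv_eq 2
  rw [iteratedDeriv_fun_add (cd_nat cA 1) (cd_nat cB' 1), iteratedDeriv_const_mul_field,
    mul_one' cd cK1, mul_one' cd1 cK] at o1
  rw [iteratedDeriv_fun_add (cd_nat cA 2) (cd_nat cB' 2), iteratedDeriv_const_mul_field,
    mul_two' cd cK1, mul_two' cd1 cK] at o2
  rw [iteratedDeriv_const_mul_field, mul_one' cKK cN, mul_one' cK cK, N0, N1] at f1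
  rw [iteratedDeriv_const_mul_field, mul_two' cKK cN, mul_two' cK cK, mul_one' cK cK,
    N0, N1, N2] at f2
  simp only [i1, i2, d0, deriv_const', zero_mul, zero_add, add_zero] at o0 o1 o2 f1 f2
  rw [i2]
  refine core_alg (deriv d 0) (deriv (deriv d) 0) (deriv (deriv (deriv d)) 0) l (K 0) (deriv K 0)
    (deriv (deriv K) 0) _ _ ha o0 ?_ ?_ ?_ ?_
  · linarith
  · linarith
  · linarith
  · linarith

theorem det2_deriv {u v : ℝ → ℝ × ℝ} {u' v' : ℝ × ℝ} {t : ℝ} (hu : HasDerivAt u u' t)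
    (hv : HasDerivAt v v' t) :
    HasDerivAt (fun x => det2 (u x) (v x)) (det2 u' (v t) + det2 (u t) v') t := by
  have u1 : HasDerivAt (fun x => (u x).1) u'.1 t := by
    simpa using hu.hasFDerivAt.fst.hasDerivAt
  have u2 : HasDerivAt (fun x => (u x).2) u'.2 t := by
    simpa using hu.hasFDerivAt.snd.hasDerivAt
  have v1 : HasDerivAt (fun x => (v x).1) v'.1 t := by
    simpa using hv.hasFDerivAt.fst.hasDerivAt
  have v2 : HasDerivAt (fun x => (v x).2) v'.2 t := by
    simpa using hv.hasFDerivAt.snd.hasDerivAt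
  refine ((u1.mul v2).sub (u2.mul v1)).congr_deriv ?_
  simp only [det2]
  ring

theorem det2_contDiff {u v : ℝ → ℝ × ℝ} (hu : ContDiff ℝ ((⊤:ℕ∞):WithTop ℕ∞) u)
    (hv : ContDiff ℝ ((⊤:ℕ∞):WithTop ℕ∞) v) :
    ContDiff ℝ ((⊤:ℕ∞):WithTop ℕ∞) (fun x => det2 (u x) (v x)) :=
  (hu.fst.mul hv.snd).sub (hu.snd.mul hv.fst)

/-- At a generic inflection point, the `C^∞` extension `F` of `(s_A)²·κ_A` (in the
original parameter `t`) satisfies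
`−(9/7)·(([γ'(0),γ⁗(0)] + [γ''(0),γ'''(0)])/[γ'(0),γ'''(0)])·F'(0) + 32·F'(0)² + 9·F''(0) = 0`. -/
theorem stmt_16 (γ : ℝ → ℝ × ℝ) (hγ : ContDiff ℝ (⊤:ℕ∞) γ)
    (hinf : HasGenericInflection γ)
    (hreg : ∀ᶠ t in 𝓝[≠] (0:ℝ), det2 (deriv γ t) (iteratedDeriv 2 γ t) ≠ 0)
    (F : ℝ → ℝ) (ε : ℝ) (hε : 0 < ε)
    (hF : ContDiffOn ℝ (⊤:ℕ∞) F (Set.Ioo (-ε) ε))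
    (hFeq : ∀ t ∈ Set.Ioo (-ε) ε, t ≠ 0 → F t = sA γ t ^ 2 * kappaA γ t) :
    -(9/7) * ((det2 (deriv γ 0) (iteratedDeriv 4 γ 0)
          + det2 (iteratedDeriv 2 γ 0) (iteratedDeriv 3 γ 0))
        / det2 (deriv γ 0) (iteratedDeriv 3 γ 0)) * deriv F 0
      + 32 * deriv F 0 ^ 2 + 9 * iteratedDeriv 2 F 0 = 0 := by
  have ci : ∀ k : ℕ, ContDiff ℝ ((⊤:ℕ∞):WithTop ℕ∞) (iteratedDeriv k γ) := fun k => by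
    rw [iteratedDeriv_eq_iterate]; exact hγ.iterate_deriv k
  have di : ∀ (k : ℕ) (t : ℝ), HasDerivAt (iteratedDeriv k γ) (iteratedDeriv (k+1) γ t) t :=
    fun k t => by
      rw [iteratedDeriv_succ]
      exact ((ci k).differentiable (by simp) t).hasDerivAt
  have g1 : deriv γ = iteratedDeriv 1 γ := iteratedDeriv_one.symm
  obtain ⟨hne, hz, ha⟩ := hinf
  simp only [sA, kappaA, g1] at *
  set d : ℝ → ℝ := fun t => det2 (iteratedDeriv 1 γ t) (iteratedDeriv 2 γ t) with hd
  set e : ℝ → ℝ := fun t => det2 (iteratedDeriv 2 γ t) (iteratedDeriv 3 γ t) with he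
  have self0 : ∀ a : ℝ × ℝ, det2 a a = 0 := fun a => by simp only [det2]; ring
  have d1 : deriv d = fun t => det2 (iteratedDeriv 1 γ t) (iteratedDeriv 3 γ t) := by
    funext t
    rw [hd, (det2_deriv (di 1 t) (di 2 t)).deriv, self0, zero_add]
  have d2 : deriv (deriv d) = fun t => det2 (iteratedDeriv 1 γ t) (iteratedDeriv 4 γ t)
      + det2 (iteratedDeriv 2 γ t) (iteratedDeriv 3 γ t) := by
    funext t
    rw [d1, (det2_deriv (di 1 t) (di 3 t)).deriv, add_comm]
  have e1 : deriv e = fun t => det2 (iteratedDeriv 2 γ t) (iteratedDeriv 4 γ t) := by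
    funext t
    rw [he, (det2_deriv (di 2 t) (di 3 t)).deriv, self0, zero_add]
  have cd : ContDiff ℝ ((⊤:ℕ∞):WithTop ℕ∞) d := det2_contDiff (ci 1) (ci 2)
  have ce : ContDiff ℝ ((⊤:ℕ∞):WithTop ℕ∞) e := det2_contDiff (ci 2) (ci 3)
  -- the second derivative is a multiple of the first at the inflection point
  obtain ⟨l, hl⟩ : ∃ l : ℝ, iteratedDeriv 2 γ 0 = l • iteratedDeriv 1 γ 0 := by
    generalize iteratedDeriv 1 γ 0 = a at hne hz
    generalize iteratedDeriv 2 γ 0 = b at hz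
    obtain ⟨a1, a2⟩ := a
    obtain ⟨b1, b2⟩ := b
    simp only [det2] at hz
    by_cases h : a1 = 0
    · have h2 : a2 ≠ 0 := fun h2 => hne (by simp [h, h2])
      refine ⟨b2 / a2, ?_⟩
      subst h
      have : b1 = 0 := by
        have : a2 * b1 = 0 := by linarith
        exact (mul_eq_zero.mp this).resolve_left h2
      ext <;> simp [this, h2]
    · refine ⟨b1 / a1, ?_⟩
      ext
      · simp [h]
      · simp only [Prod.smul_mk, smul_eq_mul]
        field_simp
        linarith
  have smul_det : ∀ v : ℝ × ℝ, det2 (iteratedDeriv 2 γ 0) v = l * det2 (iteratedDeriv 1 γ 0) v := by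
    intro v
    rw [hl]
    simp only [det2, Prod.smul_fst, Prod.smul_snd, smul_eq_mul]
    ring
  have key := core d e F (fun t => ∫ u in (0:ℝ)..t, |d u| ^ ((1:ℝ)/3)) l cd ce
    (hF.contDiffAt (Ioo_mem_nhds (by linarith) hε))
    (fun t => by
      have hc : Continuous fun u => |d u| ^ ((1:ℝ)/3) :=
        cd.continuous.abs.rpow_const (fun _ => Or.inr (by norm_num))
      exact (hc.integral_hasStrictDerivAt 0 t).hasDerivAt)
    hz (by rw [d1]; exact ha) (by rw [d1]; exact smul_det _)
    (by
      rw [d2, d1, e1]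
      simp only
      rw [smul_det, smul_det]
      ring)
    hreg
    (by
      filter_upwards [self_mem_nhdsWithin,
        nhdsWithin_le_nhds (Ioo_mem_nhds (neg_lt_zero.mpr hε) hε)] with t ht hI
      rw [hFeq t hI ht, d2, d1]
      simp only [hd, he]
      congr 2
      ring)
  rw [d2, d1] at key
  exact key
end
end

section
/- Let f : ℝ → ℝ be a C^∞ function with f(0) = −5/16 and 32·f'(0)² + 9·f''(0) = 0. Then there exists a C^∞ regular curve γ : (−δ, δ) → ℝ² (for some δ > 0) with a generic inflection point at τ = 0 such that τ is the 3/4-arclength parameter of γ (i.e. s_A(τ) = sgn(τ)·|τ|^{4/3} for all τ, equivalently [γ'(τ), γ''(τ)] = 64τ/27) and s_A(τ)²·κ_A(τ) = f(τ) for all τ ≠ 0 near 0. -/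
noncomputable section
open Real Set Filter Topology

lemma hada_deriv (φ : ℝ → ℝ) (hφ : ContDiff ℝ (⊤:ℕ∞) φ) (n : ℕ) (x : ℝ) :
    HasDerivAt (fun x : ℝ => ∫ s in (0:ℝ)..1, s ^ n * φ (s * x))
      (∫ s in (0:ℝ)..1, s ^ (n+1) * deriv φ (s * x)) x := by
  have hc : Continuous φ := hφ.continuous
  have hd : Differentiable ℝ φ := hφ.differentiable (by simp)
  have hc' : Continuous (deriv φ) := (contDiff_infty_iff_deriv.1 hφ).2.continuous
  obtain ⟨C, hC⟩ := (isCompact_Icc (a := -(|x|+1)) (b := |x|+1)).exists_bound_of_continuousOn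
    hc'.continuousOn
  refine (intervalIntegral.hasDerivAt_integral_of_dominated_loc_of_deriv_le
    (F' := fun x s => s ^ (n+1) * deriv φ (s * x)) (s := Metric.ball x 1) (bound := fun _ => C)
    (Metric.ball_mem_nhds x one_pos) ?_ ?_ ?_ ?_ ?_ ?_).2
  · exact Eventually.of_forall fun y => (by fun_prop : Continuous fun s : ℝ => s ^ n * φ (s * y)).aestronglyMeasurable
  · exact (by fun_prop : Continuous fun s : ℝ => s ^ n * φ (s * x)).intervalIntegrable _ _
  · exact (by fun_prop : Continuous fun s : ℝ => s ^ (n+1) * deriv φ (s * x)).aestronglyMeasurable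
  · refine Eventually.of_forall fun s hs y hy => ?_
    rw [uIoc_of_le zero_le_one] at hs
    have hy' : |y| ≤ |x| + 1 := by
      have : |y - x| < 1 := hy
      have := abs_sub_abs_le_abs_sub y x
      linarith
    have h1 : |s * y| ≤ |x| + 1 := by
      rw [abs_mul, abs_of_pos hs.1]
      nlinarith [hs.1, hs.2, abs_nonneg y]
    have h2 := hC (s * y) (abs_le.1 h1)
    rw [norm_mul, norm_pow]
    have h3 : ‖s‖ ^ (n+1) ≤ 1 := pow_le_one₀ (norm_nonneg _) (by rw [Real.norm_eq_abs, abs_of_pos hs.1]; exact hs.2)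
    calc _ ≤ 1 * ‖deriv φ (s*y)‖ := by gcongr
      _ ≤ C := by simpa using h2
  · exact continuous_const.intervalIntegrable _ _
  · refine Eventually.of_forall fun s hs y hy => ?_
    have h1 := ((hd (s*y)).hasDerivAt.comp y ((hasDerivAt_id y).const_mul s)).const_mul (s^n)
    refine HasDerivAt.congr_deriv h1 ?_
    ring

lemma hada_contDiff (m : ℕ) : ∀ (φ : ℝ → ℝ) (_ : ContDiff ℝ (⊤:ℕ∞) φ) (n : ℕ),
    ContDiff ℝ m (fun x : ℝ => ∫ s in (0:ℝ)..1, s ^ n * φ (s * x)) := by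
  induction m with
  | zero =>
    intro φ hφ n
    have : Differentiable ℝ (fun x : ℝ => ∫ s in (0:ℝ)..1, s ^ n * φ (s * x)) :=
      fun x => (hada_deriv φ hφ n x).differentiableAt
    simpa using this.continuous
  | succ m ih =>
    intro φ hφ n
    push_cast
    rw [contDiff_succ_iff_deriv]
    refine ⟨fun x => (hada_deriv φ hφ n x).differentiableAt, by simp, ?_⟩
    rw [show deriv (fun x : ℝ => ∫ s in (0:ℝ)..1, s ^ n * φ (s * x)) = _ from
      funext fun x => (hada_deriv φ hφ n x).deriv]
    exact ih _ (contDiff_infty_iff_deriv.1 hφ).2 (n+1)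

lemma hadamard (φ : ℝ → ℝ) (hφ : ContDiff ℝ (⊤:ℕ∞) φ) :
    ∃ g : ℝ → ℝ, ContDiff ℝ (⊤:ℕ∞) g ∧ g 0 = deriv φ 0 ∧ ∀ x, φ x = φ 0 + x * g x := by
  have hφ' := (contDiff_infty_iff_deriv.1 hφ).2
  have hg : ContDiff ℝ (⊤:ℕ∞) (fun x : ℝ => ∫ s in (0:ℝ)..1, deriv φ (s * x)) :=
    contDiff_infty.2 fun m => by simpa using hada_contDiff m _ hφ' 0
  refine ⟨_, hg, by simp, fun x => ?_⟩
  have := intervalIntegral.integral_comp_mul_right (deriv φ) (a := 0) (b := 1) (c := x)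
  by_cases hx : x = 0
  · simp [hx]
  · rw [this hx, intervalIntegral.integral_deriv_eq_sub
      (fun y _ => hφ.differentiable (by simp) y) (hφ'.continuous.intervalIntegrable _ _)]
    simp only [zero_mul, one_mul, smul_eq_mul]
    field_simp; ring

lemma hadamard3 (f : ℝ → ℝ) (hf : ContDiff ℝ (⊤:ℕ∞) f) :
    ∃ h : ℝ → ℝ, ContDiff ℝ (⊤:ℕ∞) h ∧
      ∀ x, f x = f 0 + deriv f 0 * x + iteratedDeriv 2 f 0 / 2 * x^2 + x^3 * h x := by
  obtain ⟨g, hg, hg0, hfg⟩ := hadamard f hf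
  obtain ⟨k, hk, hk0, hgk⟩ := hadamard g hg
  obtain ⟨h, hh, hh0, hkh⟩ := hadamard k hk
  refine ⟨h, hh, fun x => ?_⟩
  have hgd : ∀ x, HasDerivAt g (deriv g x) x := fun x => (hg.differentiable (by simp) x).hasDerivAt
  have hgd' : ∀ x, HasDerivAt (deriv g) (deriv (deriv g) x) x := fun x =>
    ((contDiff_infty_iff_deriv.1 hg).2.differentiable (by simp) x).hasDerivAt
  have h1 : deriv f = fun x => g x + x * deriv g x := by
    funext x
    have := ((hasDerivAt_id x).mul (hgd x)).const_add (f 0)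
    rw [show f = fun x => f 0 + x * g x from funext hfg]
    refine HasDerivAt.deriv ?_
    refine HasDerivAt.congr_deriv this ?_
    simp
  have h2 : iteratedDeriv 2 f 0 = 2 * deriv g 0 := by
    rw [iteratedDeriv_succ, iteratedDeriv_one, h1]
    refine HasDerivAt.deriv ?_
    refine HasDerivAt.congr_deriv ((hgd 0).add ((hasDerivAt_id (0:ℝ)).mul (hgd' 0))) ?_
    simp; ring
  rw [h2, hfg x, hgk x, hkh x, ← hk0, hg0]; ring

lemma ode (a : ℝ) (H : ℝ → ℝ) (hH : ContDiff ℝ (⊤:ℕ∞) H) :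
    ∃ ε > (0:ℝ), ∃ w : ℝ → ℝ, ∀ t ∈ Ioo (-ε) ε,
      HasDerivAt w (-2 * a * w t - t * w t ^ 2 - H t) t := by
  have hF : ContDiff ℝ 1 (fun z : ℝ × ℝ => ((1:ℝ), -2 * a * z.2 - z.1 * z.2 ^ 2 - H z.1)) := by
    have : ContDiff ℝ 1 H := hH.of_le (by exact_mod_cast le_top)
    fun_prop
  obtain ⟨z, hz0, ε, hε, hz⟩ := 
    hF.contDiffAt.exists_forall_mem_closedBall_exists_eq_forall_mem_Ioo_hasDerivAt₀ (x₀ := (0,0)) 0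
  simp only [zero_sub, zero_add] at hz
  have h1 : ∀ t ∈ Ioo (-ε) ε, HasDerivAt (fun t => (z t).1) 1 t := fun t ht => (hz t ht).fst
  have h2 := fun t ht => (hz t ht).snd
  have h3 : ∀ t ∈ Ioo (-ε) ε, (z t).1 = t := by
    intro t ht
    have hd : ∀ t ∈ Ioo (-ε) ε, HasDerivAt (fun t => (z t).1 - t) 0 t := fun t ht => by
      exact ((h1 t ht).sub (hasDerivAt_id t)).congr_deriv (sub_self _)
    have := isOpen_Ioo.is_const_of_deriv_eq_zero isPreconnected_Ioo
      (fun t ht => (hd t ht).differentiableAt.differentiableWithinAt) (fun t ht => (hd t ht).deriv)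
      ht (show (0:ℝ) ∈ Ioo (-ε) ε from ⟨by linarith, hε⟩)
    simp only [hz0] at this
    linarith
  refine ⟨ε, hε, fun t => (z t).2, fun t ht => ?_⟩
  have := h2 t ht
  simp only [h3 t ht] at this
  exact this

lemma ode_smooth (a : ℝ) (H : ℝ → ℝ) (hH : ContDiff ℝ (⊤:ℕ∞) H) :
    ∃ ε > (0:ℝ), ∃ w : ℝ → ℝ, ContDiff ℝ (⊤:ℕ∞) w ∧ ∀ t ∈ Ioo (-ε) ε,
      HasDerivAt w (-2 * a * w t - t * w t ^ 2 - H t) t := by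
  obtain ⟨ε, hε, w, hw⟩ := ode a H hH
  have hn : ∀ n : ℕ, ContDiffOn ℝ n w (Ioo (-ε) ε) := by
    intro n
    induction n with
    | zero => 
      have : ContinuousOn w (Ioo (-ε) ε) :=
        fun t ht => (hw t ht).continuousAt.continuousWithinAt
      simpa using this
    | succ n ih =>
      push_cast
      rw [contDiffOn_succ_iff_deriv_of_isOpen isOpen_Ioo]
      refine ⟨fun t ht => (hw t ht).differentiableAt.differentiableWithinAt, by simp, ?_⟩
      have : ContDiffOn ℝ n (fun t => -2 * a * w t - t * w t ^ 2 - H t) (Ioo (-ε) ε) := by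
        have : ContDiffOn ℝ n H (Ioo (-ε) ε) := (hH.of_le (by exact_mod_cast le_top)).contDiffOn
        fun_prop
      exact this.congr fun t ht => (hw t ht).deriv
  have hw' : ContDiffOn ℝ (⊤:ℕ∞) w (Ioo (-ε) ε) := contDiffOn_infty.2 hn
  let χ : ContDiffBump (0:ℝ) := ⟨ε/4, ε/2, by positivity, by linarith⟩
  refine ⟨ε/4, by positivity, fun t => χ t * w t, ?_, fun t ht => ?_⟩
  · refine contDiff_iff_contDiffAt.2 fun t => ?_
    by_cases ht' : t ∉ tsupport χ
    · have h0 : χ =ᶠ[𝓝 t] 0 := notMem_tsupport_iff_eventuallyEq.1 ht'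
      refine (contDiffAt_const (c := (0:ℝ))).congr_of_eventuallyEq ?_
      filter_upwards [h0] with s hs
      simp [hs]
    rw [not_not, χ.tsupport_eq] at ht'
    have h1 : |t| ≤ ε/2 := by simpa using ht'
    have h2 : t ∈ Ioo (-ε) ε := abs_lt.1 (by linarith)
    exact χ.contDiff.contDiffAt.mul (hw'.contDiffAt (isOpen_Ioo.mem_nhds h2))
  · have hχ : ∀ t ∈ Ioo (-(ε/4)) (ε/4), χ t = 1 := fun t ht =>
      χ.one_of_mem_closedBall (by
        have := abs_lt.2 ht
        simpa using this.le)
    have h1 := hw t ⟨by linarith [ht.1], by linarith [ht.2]⟩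
    simp only [hχ t ht, one_mul]
    refine h1.congr_of_eventuallyEq ?_
    filter_upwards [isOpen_Ioo.mem_nhds ht] with s hs
    simp [hχ s hs]

lemma prim (φ : ℝ → ℝ) (hφ : ContDiff ℝ (⊤:ℕ∞) φ) :
    ∃ Φ : ℝ → ℝ, ContDiff ℝ (⊤:ℕ∞) Φ ∧ Φ 0 = 0 ∧ ∀ x, HasDerivAt Φ (φ x) x := by
  have h : ∀ x, HasDerivAt (fun x => ∫ t in (0:ℝ)..x, φ t) (φ x) x := fun x =>
    hφ.continuous.integral_hasStrictDerivAt 0 x |>.hasDerivAt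
  refine ⟨_, contDiff_infty_iff_deriv.2 ⟨fun x => (h x).differentiableAt, ?_⟩, by simp, h⟩
  rw [show deriv _ = φ from funext fun x => (h x).deriv]
  exact hφ


lemma sA_int_pos (τ : ℝ) (h : 0 ≤ τ) :
    ∫ u in (0:ℝ)..τ, |64 * u / 27| ^ ((1:ℝ)/3) = τ ^ ((4:ℝ)/3) := by
  have h1 : ∀ u ∈ uIcc 0 τ, |64 * u / 27| ^ ((1:ℝ)/3) = 4/3 * u ^ ((1:ℝ)/3) := by
    intro u hu
    rw [uIcc_of_le h] at hu
    have hu0 := hu.1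
    rw [abs_of_nonneg (by positivity), show 64 * u / 27 = (4/3:ℝ)^(3:ℝ) * u by
      rw [show (3:ℝ) = ((3:ℕ):ℝ) by norm_num, Real.rpow_natCast]; push_cast; ring,
      Real.mul_rpow (by positivity) hu0, ← Real.rpow_mul (by norm_num)]
    norm_num
  rw [intervalIntegral.integral_congr h1, intervalIntegral.integral_const_mul,
    integral_rpow (by left; norm_num), Real.zero_rpow (by norm_num)]
  norm_num
  ring

lemma sA_int (τ : ℝ) :
    ∫ u in (0:ℝ)..τ, |64 * u / 27| ^ ((1:ℝ)/3) = Real.sign τ * |τ| ^ ((4:ℝ)/3) := by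
  rcases lt_trichotomy τ 0 with h | h | h
  · have h1 := intervalIntegral.integral_comp_neg (a := 0) (b := -τ)
      (fun u : ℝ => |64 * u / 27| ^ ((1:ℝ)/3))
    simp only [neg_neg, neg_zero] at h1
    rw [intervalIntegral.integral_symm, ← h1, Real.sign_of_neg h, abs_of_neg h,
      ← sA_int_pos (-τ) (by linarith)]
    simp only [mul_neg, neg_div, abs_neg, neg_mul, one_mul]
  · simp [h]
  · rw [sA_int_pos τ h.le, Real.sign_of_pos h, abs_of_pos h, one_mul]

/-- The frame computation: a smooth `v` gives a global curve. -/
lemma curve (v : ℝ → ℝ) (hv : ContDiff ℝ (⊤:ℕ∞) v) :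
    ∃ γ : ℝ → ℝ × ℝ, ContDiff ℝ (⊤:ℕ∞) γ ∧ deriv γ 0 ≠ 0 ∧
      (∀ t, det2 (deriv γ t) (iteratedDeriv 2 γ t) = 64 * t / 27) ∧
      (∀ t, det2 (deriv γ t) (iteratedDeriv 3 γ t) = 64 / 27) ∧
      (∀ t, det2 (iteratedDeriv 2 γ t) (iteratedDeriv 3 γ t)
        = 64 / 27 * (v t - t * (deriv v t + v t ^ 2))) ∧
      (∀ t, det2 (deriv γ t) (iteratedDeriv 4 γ t)
        = - (64 / 27 * (v t - t * (deriv v t + v t ^ 2)))) := by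
  obtain ⟨P, hP, hP0, hPd⟩ := prim v hv
  have hv' := (contDiff_infty_iff_deriv.1 hv).2
  have hXs : ContDiff ℝ (⊤:ℕ∞) (fun t => Real.exp (P t)) := hP.exp
  have hX : ∀ t, HasDerivAt (fun t => Real.exp (P t)) (v t * Real.exp (P t)) t := fun t =>
    ((hPd t).exp).congr_deriv (mul_comm _ _)
  have hXn : ∀ t, HasDerivAt (fun t => Real.exp (- P t)) (- v t * Real.exp (- P t)) t := fun t =>
    ((hPd t).neg.exp).congr_deriv (mul_comm _ _)
  have hXns : ContDiff ℝ (⊤:ℕ∞) (fun t => Real.exp (- P t)) := hP.neg.exp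
  obtain ⟨Q, hQ, hQ0, hQd⟩ := prim (fun t => 64 / 27 * t * (Real.exp (- P t) * Real.exp (- P t)))
    (by fun_prop)
  obtain ⟨A, hA, hA0, hAd⟩ := prim (fun t => Real.exp (P t)) hXs
  obtain ⟨B, hB, hB0, hBd⟩ := prim (fun t => Real.exp (P t) * Q t) (hXs.mul hQ)
  have hXX : ∀ t, Real.exp (P t) * Real.exp (- P t) = 1 := fun t => by
    rw [← Real.exp_add]; simp
  have hm : ∀ t, HasDerivAt (fun t => deriv v t + v t ^ 2)
      (deriv (deriv v) t + 2 * v t * deriv v t) t := fun t => by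
    have h1 := (hv'.differentiable (by simp) t).hasDerivAt
    have h2 := (hv.differentiable (by simp) t).hasDerivAt
    exact (h1.add (h2.pow 2)).congr_deriv (by simp)
  have hvd : ∀ t, HasDerivAt v (deriv v t) t := fun t =>
    (hv.differentiable (by simp) t).hasDerivAt
  have hY : ∀ t, HasDerivAt (fun t => Real.exp (P t) * Q t)
      (v t * (Real.exp (P t) * Q t) + 64 / 27 * t * Real.exp (- P t)) t := fun t =>
    ((hX t).mul (hQd t)).congr_deriv (by linear_combination 64 / 27 * t * Real.exp (- P t) * hXX t)
  have d1 : deriv (fun t => (A t, B t)) = fun t => (Real.exp (P t), Real.exp (P t) * Q t) :=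
    funext fun t => ((hAd t).prodMk (hBd t)).deriv
  have d2 : iteratedDeriv 2 (fun t => (A t, B t)) = fun t => (v t * Real.exp (P t),
      v t * (Real.exp (P t) * Q t) + 64 / 27 * t * Real.exp (- P t)) := by
    rw [iteratedDeriv_succ, iteratedDeriv_one, d1]
    exact funext fun t => ((hX t).prodMk (hY t)).deriv
  have d3 : iteratedDeriv 3 (fun t => (A t, B t)) = fun t =>
      ((deriv v t + v t ^ 2) * Real.exp (P t),
      (deriv v t + v t ^ 2) * (Real.exp (P t) * Q t) + 64 / 27 * Real.exp (- P t)) := by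
    rw [iteratedDeriv_succ, d2]
    refine funext fun t => (HasDerivAt.prodMk ?_ ?_).deriv
    · exact ((hvd t).mul (hX t)).congr_deriv (by ring)
    · exact (((hvd t).mul (hY t)).add
        (((hasDerivAt_id t).const_mul (64/27)).mul (hXn t))).congr_deriv (by simp only [id]; ring)
  have d4 : iteratedDeriv 4 (fun t => (A t, B t)) = fun t =>
      ((deriv (deriv v) t + 2 * v t * deriv v t + (deriv v t + v t ^ 2) * v t) * Real.exp (P t),
      (deriv (deriv v) t + 2 * v t * deriv v t + (deriv v t + v t ^ 2) * v t)
        * (Real.exp (P t) * Q t) + (deriv v t + v t ^ 2) * (64 / 27 * t * Real.exp (- P t))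
        - 64 / 27 * v t * Real.exp (- P t)) := by
    rw [iteratedDeriv_succ, d3]
    refine funext fun t => (HasDerivAt.prodMk ?_ ?_).deriv
    · exact ((hm t).mul (hX t)).congr_deriv (by ring)
    · exact (((hm t).mul (hY t)).add ((hXn t).const_mul (64/27))).congr_deriv (by ring)
  refine ⟨fun t => (A t, B t), hA.prodMk hB, ?_, ?_, ?_, ?_, ?_⟩
  · rw [d1]
    intro h
    exact (Real.exp_pos (P 0)).ne' (congrArg Prod.fst h)
  · intro t
    rw [d1, d2]
    simp only [det2]
    linear_combination 64 * t / 27 * hXX t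
  · intro t
    rw [d1, d3]
    simp only [det2]
    linear_combination 64 / 27 * hXX t
  · intro t
    rw [d2, d3]
    simp only [det2]
    linear_combination (64 / 27 * (v t - t * (deriv v t + v t ^ 2))) * hXX t
  · intro t
    rw [d1, d4]
    simp only [det2]
    linear_combination -(64 / 27 * (v t - t * (deriv v t + v t ^ 2))) * hXX t

/-- Realization: for any smooth `f` with `f(0) = −5/16` and `32·f'(0)² + 9·f''(0) = 0`,
there is a regular curve with a generic inflection point at `0`, parametrized by its
3/4-arclength parameter, whose normalized affine curvature function is `f`. -/
theorem stmt_18 (f : ℝ → ℝ) (hf : ContDiff ℝ (⊤:ℕ∞) f)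
    (hf0 : f 0 = -(5/16))
    (hrel : 32 * deriv f 0 ^ 2 + 9 * iteratedDeriv 2 f 0 = 0) :
    ∃ δ > (0:ℝ), ∃ γ : ℝ → ℝ × ℝ,
      ContDiffOn ℝ (⊤:ℕ∞) γ (Set.Ioo (-δ) δ) ∧ HasGenericInflection γ ∧
      (∀ τ ∈ Set.Ioo (-δ) δ, sA γ τ = Real.sign τ * |τ| ^ ((4:ℝ)/3)) ∧
      (∀ τ ∈ Set.Ioo (-δ) δ, det2 (deriv γ τ) (iteratedDeriv 2 γ τ) = 64 * τ / 27) ∧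
      (∀ τ ∈ Set.Ioo (-δ) δ, τ ≠ 0 → sA γ τ ^ 2 * kappaA γ τ = f τ) := by
  obtain ⟨h, hh, hfh⟩ := hadamard3 f hf
  set a : ℝ := 16 / 9 * deriv f 0 with ha
  obtain ⟨ε, hε, w, hw, hwd⟩ := ode_smooth a (fun t => 16 / 9 * h t) (by fun_prop)
  obtain ⟨γ, hγ, h0, h12, h13, h23, h14⟩ := curve (fun t => a + t * w t) (by fun_prop)
  have hsA : ∀ τ, sA γ τ = Real.sign τ * |τ| ^ ((4:ℝ)/3) := fun τ => by
    simp only [sA, h12]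
    exact sA_int τ
  refine ⟨ε, hε, γ, hγ.contDiffOn, ⟨h0, by simp [h12], by rw [h13]; norm_num⟩,
    fun τ _ => hsA τ, fun τ _ => h12 τ, fun τ hτ hτ0 => ?_⟩
  have hvd : deriv (fun t => a + t * w t) τ
      = w τ + τ * (-2 * a * w τ - τ * w τ ^ 2 - 16 / 9 * h τ) :=
    ((((hasDerivAt_id τ).mul (hwd τ hτ)).const_add a).congr_deriv (by simp)).deriv
  have hpos : 0 < |τ| := abs_pos.2 hτ0
  have hs2 : Real.sign τ ^ 2 = 1 := by
    rcases hτ0.lt_or_gt with h | h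
    · rw [Real.sign_of_neg h]; norm_num
    · rw [Real.sign_of_pos h]; norm_num
  have hp1 : (|τ| ^ ((4:ℝ)/3)) ^ 2 = |τ| ^ ((8:ℝ)/3) := by
    rw [← Real.rpow_natCast, ← Real.rpow_mul hpos.le]; norm_num
  have hp2 : |64 * τ / 27| ^ ((8:ℝ)/3) = (4/3) ^ 8 * |τ| ^ ((8:ℝ)/3) := by
    rw [show |64 * τ / 27| = (4/3:ℝ)^(3:ℝ) * |τ| by
      rw [abs_div, abs_mul, show (3:ℝ) = ((3:ℕ):ℝ) by norm_num, Real.rpow_natCast]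
      norm_num; ring,
      Real.mul_rpow (by positivity) hpos.le, ← Real.rpow_mul (by norm_num)]
    rw [show (3:ℝ) * (8/3) = ((8:ℕ):ℝ) by norm_num, Real.rpow_natCast]
  have hq : |τ| ^ ((8:ℝ)/3) ≠ 0 := (Real.rpow_pos_of_pos hpos _).ne'
  rw [hsA, mul_pow, hs2, hp1, kappaA, h12, h13, h14, h23, hp2, hvd]
  have hS : τ * (a + τ * w τ - τ * (w τ + τ * (-2 * a * w τ - τ * w τ ^ 2 - 16 / 9 * h τ)
      + (a + τ * w τ) ^ 2)) = 16 / 9 * (f τ + 5 / 16) := by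
    rw [hfh τ, hf0, ha]
    linear_combination (-(8 / 81) * τ ^ 2) * hrel
  generalize a + τ * w τ - τ * (w τ + τ * (-2 * a * w τ - τ * w τ ^ 2 - 16 / 9 * h τ)
      + (a + τ * w τ) ^ 2) = S at hS ⊢
  rw [one_mul, mul_div_assoc', div_eq_iff (by positivity)]
  linear_combination (9 * (64 / 27) ^ 2 * |τ| ^ ((8:ℝ)/3)) * hS
end
end
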